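/- Let i ∈ Σ_{n+1} and let λ be a regular dominant integral weight. Then the system consisting of the |GP(i)| string inequalities together with the N λ-inequalities is non-redundant for the string polytope Δ_i(λ); equivalently, Δ_i(λ) has exactly |GP(i)| + N facets. -/

import Mathlib

open scoped Classical

noncomputable section

namespace StringPolytope

/-! ### Words, reduced words, two-moves -/

/-- the simple transposition `s_a = (a, a+1)` acting on `ℕ` (wires are `1, …, n+1`). -/
def sTrans (a : ℕ) : Equiv.Perm ℕ := Equiv.swap a (a + 1)

/-- product `s_{i₁} ⋯ s_{i_N}` of the simple transpositions of a word. -/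
def wordProd (w : List ℕ) : Equiv.Perm ℕ := (w.map sTrans).prod

/-- the longest element `w₀` of the symmetric group on `{1, …, n+1}`,
sending `k ↦ n + 2 - k` there and fixing everything else. -/
def longestPerm (n : ℕ) : Equiv.Perm ℕ :=
  Function.Involutive.toPerm
    (fun k => if 1 ≤ k ∧ k ≤ n + 1 then n + 2 - k else k)
    (by intro k; dsimp only; split_ifs <;> omega)

/-- `w ∈ Σ_{n+1}`: a reduced word of the longest element of `S_{n+1}`,
i.e. a word over `[n] = {1,…,n}` of length `N = n(n+1)/2` whose product is `w₀`. -/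
def IsReduced (n : ℕ) (w : List ℕ) : Prop :=
  w.length = n * (n + 1) / 2 ∧ (∀ a ∈ w, 1 ≤ a ∧ a ≤ n) ∧ wordProd w = longestPerm n

/-- a single 2-move: exchange two adjacent letters `(a, b)` with `|a - b| > 1`. -/
def TwoMoveStep (w w' : List ℕ) : Prop :=
  ∃ u v a b, (a + 1 < b ∨ b + 1 < a) ∧ w = u ++ a :: b :: v ∧ w' = u ++ b :: a :: v

/-- 2-move equivalence of words. -/
def TwoMoveEquiv : List ℕ → List ℕ → Prop := Relation.ReflTransGen TwoMoveStep

/-- `A_n = (1, 2, …, n)`. -/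
def ascWord (n : ℕ) : List ℕ := (List.range n).map (· + 1)

/-- `D_n = (n, n-1, …, 1)`. -/
def descWord (n : ℕ) : List ℕ := (ascWord n).reverse

/-! ### The wiring diagram -/

/-- the letter `i_j` of `w` (1-based index `j`); the node `t_j` lies in column `i_j`. -/
def letterAt (w : List ℕ) (j : ℕ) : ℕ := w.getD (j - 1) 0

/-- `1 ≤ j ≤ N`: `t_j` is an actual node of the diagram. -/
def ValidNode (w : List ℕ) (j : ℕ) : Prop := 1 ≤ j ∧ j ≤ w.length

/-- the column-to-wire assignment just above node `t_j`
(at the top of the diagram, wire `k` is in column `k`). -/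
def stateAbove (w : List ℕ) (j : ℕ) : Equiv.Perm ℕ := wordProd (w.take (j - 1))

/-- the column-to-wire assignment just below node `t_j`. -/
def stateBelow (w : List ℕ) (j : ℕ) : Equiv.Perm ℕ := wordProd (w.take j)

/-- one of the two wires crossing at node `t_j` (the one leaving upward-left). -/
def wireX (w : List ℕ) (j : ℕ) : ℕ := stateAbove w j (letterAt w j)

/-- the other wire crossing at node `t_j` (the one leaving upward-right). -/
def wireY (w : List ℕ) (j : ℕ) : ℕ := stateAbove w j (letterAt w j + 1)

/-- the node `t_j` lies on the wire `ℓ_r`. -/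
def NodeOnWire (w : List ℕ) (j r : ℕ) : Prop := wireX w j = r ∨ wireY w j = r

/-- given one wire `r` at node `t_j`, the other wire crossing there. -/
def otherWire (w : List ℕ) (j r : ℕ) : ℕ := if wireX w j = r then wireY w j else wireX w j

/-- the column of wire `ℓ_r` at the height of node `t_j`. -/
def wireCol (w : List ℕ) (j r : ℕ) : ℕ := (stateBelow w j).symm r

/-- node `t_j` lies strictly below the wire `ℓ_{n+1}`
(which runs from the bottom-left corner to the top-right corner). -/
def BelowWireLast (n : ℕ) (w : List ℕ) (j : ℕ) : Prop :=
  wireCol w j (n + 1) < letterAt w j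

/-- node `t_j` lies strictly above the wire `ℓ_{n+1}`. -/
def AboveWireLast (n : ℕ) (w : List ℕ) (j : ℕ) : Prop :=
  letterAt w j + 1 < wireCol w j (n + 1)

/-- node `t_j` lies strictly below the wire `ℓ_1`
(which runs from the bottom-right corner to the top-left corner). -/
def BelowWireOne (w : List ℕ) (j : ℕ) : Prop :=
  letterAt w j + 1 < wireCol w j 1

/-- node `t_j` lies strictly above the wire `ℓ_1`. -/
def AboveWireOne (w : List ℕ) (j : ℕ) : Prop :=
  wireCol w j 1 < letterAt w j

/-! ### Rigorous (Gleizer–Postnikov) paths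

A path in `G(i, k)` is encoded by `k` together with the list of its switching
nodes, in order of travel.  Wires `ℓ_1, …, ℓ_k` are oriented upward
(decreasing node index) and the remaining wires downward. -/

/-- the (1-based indices of the) nodes lying on wire `ℓ_r`, in order of increasing index. -/
def nodesOn (w : List ℕ) (r : ℕ) : List ℕ :=
  ((List.range w.length).map (· + 1)).filter (fun j => decide (NodeOnWire w j r))

/-- nodes on wire `ℓ_r` strictly between the nodes `t_a` and `t_b`. -/
def segList (w : List ℕ) (r a b : ℕ) : List ℕ :=
  (nodesOn w r).filter (fun j => decide (min a b < j ∧ j < max a b))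

/-- nodes on wire `ℓ_r` strictly below the node `t_a`. -/
def tailList (w : List ℕ) (r a : ℕ) : List ℕ :=
  (nodesOn w r).filter (fun j => decide (a < j))

/-- a forbidden fragment of `G(i, k)`: the path passes straight through node `t_j`
travelling along the wire `ℓ_r`, where the other wire `ℓ_b` crossing there has the same
orientation as `ℓ_r` and (`r < b` if both upward, `r > b` if both downward). -/
def Forbidden (w : List ℕ) (k j r : ℕ) : Prop :=
  (r ≤ k ∧ otherWire w j r ≤ k ∧ r < otherWire w j r) ∨
  (k < r ∧ k < otherWire w j r ∧ otherWire w j r < r)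

/-- travelling in `G(i,k)`: currently on wire `ℓ_r` at node `t_a` (just switched there),
with future switching nodes `ms`; the travel is legal and ends at `L_{k+1}`. -/
def TravelOK (w : List ℕ) (k : ℕ) : ℕ → ℕ → List ℕ → Prop
  | r, a, [] => r = k + 1 ∧ ∀ j ∈ tailList w r a, ¬ Forbidden w k j r
  | r, a, m :: ms =>
      ValidNode w m ∧ NodeOnWire w m r ∧
      (if r ≤ k then m < a else a < m) ∧
      (∀ j ∈ segList w r a m, ¬ Forbidden w k j r) ∧
      TravelOK w k (otherWire w m r) m ms

/-- all nodes visited after the switch at node `t_a` onto wire `ℓ_r`. -/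
def visitTail (w : List ℕ) : ℕ → ℕ → List ℕ → List ℕ
  | r, a, [] => tailList w r a
  | r, a, m :: ms => segList w r a m ++ m :: visitTail w (otherWire w m r) m ms

/-- the list of all nodes visited by the path (switching nodes and straight passes). -/
def visitList (w : List ℕ) (k : ℕ) : List ℕ → List ℕ
  | [] => []
  | m :: ms => tailList w k m ++ m :: visitTail w (otherWire w m k) m ms

/-- `(k, ms)` encodes a rigorous (Gleizer–Postnikov) path in `G(i, k)`:
it starts at `L_k` going up the wire `ℓ_k`, switches wires exactly at the nodes
listed in `ms`, respects the orientation, ends at `L_{k+1}`, contains no forbidden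
fragment and passes through each node at most once. -/
def IsGPPath (n : ℕ) (w : List ℕ) (k : ℕ) (ms : List ℕ) : Prop :=
  1 ≤ k ∧ k ≤ n ∧
  (match ms with
   | [] => False
   | m :: rest =>
       ValidNode w m ∧ NodeOnWire w m k ∧
       (∀ j ∈ tailList w k m, ¬ Forbidden w k j k) ∧
       TravelOK w k (otherWire w m k) m rest) ∧
  (visitList w k ms).Nodup

/-- the set `GP(i)` of all rigorous paths of `G(i)`. -/
def GP (n : ℕ) (w : List ℕ) : Set (ℕ × List ℕ) := {p | IsGPPath n w p.1 p.2}

/-- `|GP(i)|`, the number of rigorous paths. -/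
def numGP (n : ℕ) (w : List ℕ) : ℕ := (GP n w).ncard

/-- the successive switches of a path: `(node, from-wire, to-wire)`. -/
def pathSwitches (w : List ℕ) : ℕ → List ℕ → List (ℕ × ℕ × ℕ)
  | _, [] => []
  | r, m :: ms => (m, r, otherWire w m r) :: pathSwitches w (otherWire w m r) ms

/-- the wire-expression of a path: the successive wires travelled. -/
def wireSeq (w : List ℕ) : ℕ → List ℕ → List ℕ
  | r, [] => [r]
  | r, m :: ms => r :: wireSeq w (otherWire w m r) ms

/-- the peaks of a path: switching nodes where the path switches from an
upward wire to a downward wire. -/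
def peaks (w : List ℕ) (k : ℕ) (ms : List ℕ) : List ℕ :=
  ((pathSwitches w k ms).filter (fun e => decide (e.2.1 ≤ k ∧ k < e.2.2))).map (·.1)

/-! ### String cone, `λ`-cone, string polytope -/

/-- `N = n(n+1)/2`, the number of nodes. -/
abbrev Dim (n : ℕ) : ℕ := n * (n + 1) / 2

/-- the coefficient `a_j` of `t_j` in the string inequality of the path `(k, ms)`:
`+1` if the path switches at `t_j` from `ℓ_r` to `ℓ_s` with `r < s`,
`-1` if it switches with `r > s`, and `0` otherwise. -/
def coeff (w : List ℕ) (k : ℕ) (ms : List ℕ) (j : ℕ) : ℝ :=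
  ((pathSwitches w k ms).map (fun e =>
    if e.1 = j then (if e.2.1 < e.2.2 then (1 : ℝ) else -1) else 0)).sum

/-- the (primitive inward normal) coefficient vector of the string inequality of a path. -/
def normalVec (n : ℕ) (w : List ℕ) (p : ℕ × List ℕ) : Fin (Dim n) → ℝ :=
  fun j => coeff w p.1 p.2 ((j : ℕ) + 1)

/-- the left-hand side `∑ a_j t_j` of the string inequality of the path `p`. -/
def stringIneq (n : ℕ) (w : List ℕ) (p : ℕ × List ℕ) (t : Fin (Dim n) → ℝ) : ℝ :=
  ∑ j : Fin (Dim n), normalVec n w p j * t j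

/-- the string cone `C_i ⊆ ℝ^N`. -/
def stringCone (n : ℕ) (w : List ℕ) : Set (Fin (Dim n) → ℝ) :=
  {t | ∀ p ∈ GP n w, 0 ≤ stringIneq n w p t}

/-- the polyhedron cut out by all string inequalities except the one of `p₀`. -/
def stringConeExcept (n : ℕ) (w : List ℕ) (p₀ : ℕ × List ℕ) : Set (Fin (Dim n) → ℝ) :=
  {t | ∀ p ∈ GP n w, p ≠ p₀ → 0 ≤ stringIneq n w p t}

/-- the coefficient `a_k` in the `λ`-inequality of node `t_j`:
`1` if `t_k` is one column left or right of `t_j`, `-2` if in the same column. -/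
def lamCoeff (w : List ℕ) (j k : ℕ) : ℝ :=
  if letterAt w k = letterAt w j then -2
  else if letterAt w k = letterAt w j + 1 ∨ letterAt w k + 1 = letterAt w j then 1
  else 0

/-- the `λ`-inequality of node `t_{j+1}`:
`t_j ≤ λ_{i_j} + ∑_{k > j} a_k t_k`. -/
def LamIneq (n : ℕ) (w : List ℕ) (lam : ℕ → ℤ) (j : Fin (Dim n)) (t : Fin (Dim n) → ℝ) : Prop :=
  t j ≤ (lam (letterAt w ((j : ℕ) + 1)) : ℝ) +
    ∑ k : Fin (Dim n),
      (if (j : ℕ) < (k : ℕ) then lamCoeff w ((j : ℕ) + 1) ((k : ℕ) + 1) else 0) * t k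

/-- the `λ`-cone `C_i^λ ⊆ ℝ^N`. -/
def lamCone (n : ℕ) (w : List ℕ) (lam : ℕ → ℤ) : Set (Fin (Dim n) → ℝ) :=
  {t | ∀ j, LamIneq n w lam j t}

/-- the polyhedron cut out by all `λ`-inequalities except the one of `j₀`. -/
def lamConeExcept (n : ℕ) (w : List ℕ) (lam : ℕ → ℤ) (j₀ : Fin (Dim n)) :
    Set (Fin (Dim n) → ℝ) :=
  {t | ∀ j, j ≠ j₀ → LamIneq n w lam j t}

/-- the string polytope `Δ_i(λ) = C_i ∩ C_i^λ`. -/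
def stringPolytope (n : ℕ) (w : List ℕ) (lam : ℕ → ℤ) : Set (Fin (Dim n) → ℝ) :=
  stringCone n w ∩ lamCone n w lam

/-- `λ = λ_1 ϖ_1 + ⋯ + λ_n ϖ_n` is a dominant integral weight: all `λ_j ≥ 0`. -/
def Dominant (n : ℕ) (lam : ℕ → ℤ) : Prop := ∀ j, 1 ≤ j → j ≤ n → 0 ≤ lam j

/-- `λ` is a regular dominant integral weight: all `λ_j > 0`. -/
def RegularDominant (n : ℕ) (lam : ℕ → ℤ) : Prop := ∀ j, 1 ≤ j → j ≤ n → 0 < lam j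

/-! ### Unimodular equivalence, Gelfand–Cetlin polytope, facets -/

/-- `P` and `Q` are unimodularly equivalent: `Q = M(P) + v` with `M ∈ GL(m, ℤ)`, `v ∈ ℤ^m`. -/
def UnimodEquiv {m : ℕ} (P Q : Set (Fin m → ℝ)) : Prop :=
  ∃ (M : Matrix (Fin m) (Fin m) ℤ) (v : Fin m → ℤ), IsUnit M.det ∧
    Q = (fun x i => (∑ j, (M i j : ℝ) * x j) + (v i : ℝ)) '' P

/-- the entry `x_{k,j}` (`1 ≤ j ≤ k ≤ n+1`) of a Gelfand–Cetlin pattern, where the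
top row is `x_{n+1,j} = λ_j + ⋯ + λ_n` and `x_{n+1,n+1} = 0`; the pair `(k, j)` is
encoded as the coordinate `k(k-1)/2 + (j-1)` of `ℝ^N`. -/
def gcX (n : ℕ) (lam : ℕ → ℤ) (x : Fin (Dim n) → ℝ) (k j : ℕ) : ℝ :=
  if k = n + 1 then (if j ≤ n then ∑ t ∈ Finset.Icc j n, (lam t : ℝ) else 0)
  else if h : k * (k - 1) / 2 + (j - 1) < Dim n then x ⟨k * (k - 1) / 2 + (j - 1), h⟩ else 0

/-- the Gelfand–Cetlin polytope `GC(λ) ⊆ ℝ^N`. -/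
def GCPolytope (n : ℕ) (lam : ℕ → ℤ) : Set (Fin (Dim n) → ℝ) :=
  {x | ∀ k j, 1 ≤ k → k ≤ n → 1 ≤ j → j ≤ k →
      gcX n lam x k j ≤ gcX n lam x (k + 1) j ∧
      gcX n lam x (k + 1) (j + 1) ≤ gcX n lam x k j}

/-- a face of a convex set: a convex extreme subset. -/
def IsFaceSet {m : ℕ} (S F : Set (Fin m → ℝ)) : Prop := IsExtreme ℝ S F ∧ Convex ℝ F

/-- a facet: a maximal proper face. -/
def IsFacet {m : ℕ} (S F : Set (Fin m → ℝ)) : Prop :=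
  IsFaceSet S F ∧ F ≠ S ∧ ∀ G, IsFaceSet S G → G ≠ S → F ⊆ G → F = G

/-- the number of facets. -/
def numFacets {m : ℕ} (S : Set (Fin m → ℝ)) : ℕ := {F | IsFacet S F}.ncard

/-- combinatorial equivalence: an inclusion-preserving bijection between face lattices. -/
def CombEquiv {m : ℕ} (S T : Set (Fin m → ℝ)) : Prop :=
  ∃ e : {F // IsFaceSet S F} ≃ {F // IsFaceSet T F},
    ∀ F G : {F // IsFaceSet S F}, F.1 ⊆ G.1 ↔ (e F).1 ⊆ (e G).1

/-! ### Indices, contractions and extensions -/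

/-- the `D`-index `ind_D(i) = |i_D^+|` for a decomposition `i ∼ i_D^- D_n i_D^+`
(independent of the decomposition). -/
def indD (n : ℕ) (w : List ℕ) : ℕ :=
  sInf {s | ∃ u v : List ℕ, v.length = s ∧ TwoMoveEquiv w (u ++ descWord n ++ v)}

/-- the `A`-index `ind_A(i) = |i_A^+|` for a decomposition `i ∼ i_A^- A_n i_A^+`. -/
def indA (n : ℕ) (w : List ℕ) : ℕ :=
  sInf {s | ∃ u v : List ℕ, v.length = s ∧ TwoMoveEquiv w (u ++ ascWord n ++ v)}

/-- `w'` is a `D`-contraction `C_D(w) = i_D^- (i_D^+ - 1)` of `w ∈ Σ_{n+1}`. -/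
def IsContractionD (n : ℕ) (w w' : List ℕ) : Prop :=
  ∃ u v : List ℕ, TwoMoveEquiv w (u ++ descWord n ++ v) ∧ w' = u ++ v.map (· - 1)

/-- `w'` is an `A`-contraction `C_A(w) = (i_A^- - 1) i_A^+` of `w ∈ Σ_{n+1}`. -/
def IsContractionA (n : ℕ) (w w' : List ℕ) : Prop :=
  ∃ u v : List ℕ, TwoMoveEquiv w (u ++ ascWord n ++ v) ∧ w' = u.map (· - 1) ++ v

/-- the `D`-extension `E_D(s) : Σ_{n+1} → Σ_{n+2}`,
`i = i^-(s) i^+(s) ↦ i^-(s) D_{n+1} (i^+(s) + 1)` where `|i^+(s)| = s`. -/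
def extD (n : ℕ) (s : ℕ) (w : List ℕ) : List ℕ :=
  w.take (w.length - s) ++ descWord (n + 1) ++ (w.drop (w.length - s)).map (· + 1)

/-- the `A`-extension `E_A(s) : Σ_{n+1} → Σ_{n+2}`,
`i = i^-(s) i^+(s) ↦ (i^-(s) + 1) A_{n+1} i^+(s)`. -/
def extA (n : ℕ) (s : ℕ) (w : List ℕ) : List ℕ :=
  (w.take (w.length - s)).map (· + 1) ++ ascWord (n + 1) ++ w.drop (w.length - s)

/-- there exists `(σ_1, …, σ_n) ∈ {A, D}^n` (here `true = D`, `false = A`) such that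
`ind_{σ_k}(C_{σ_{k+1}} ∘ ⋯ ∘ C_{σ_n}(i)) = 0` for all `k = n, …, 1`. -/
def SimplicialWord (n : ℕ) (w : List ℕ) : Prop :=
  ∃ (σ : ℕ → Bool) (c : ℕ → List ℕ), c n = w ∧
    ∀ k, 1 ≤ k → k ≤ n →
      (if σ k then IsContractionD k (c k) (c (k - 1)) ∧ indD k (c k) = 0
       else IsContractionA k (c k) (c (k - 1)) ∧ indA k (c k) = 0)


/-- the `D`-coindex `coind_D(i) = |i_D^-|`. -/
def coindD (n : ℕ) (w : List ℕ) : ℕ :=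
  sInf {s | ∃ u v : List ℕ, u.length = s ∧ TwoMoveEquiv w (u ++ descWord n ++ v)}

/-- the `A`-coindex `coind_A(i) = |i_A^-|`. -/
def coindA (n : ℕ) (w : List ℕ) : ℕ :=
  sInf {s | ∃ u v : List ℕ, u.length = s ∧ TwoMoveEquiv w (u ++ ascWord n ++ v)}

/-- the `a`-th (0-based) coordinate of a point of `ℝ^N`. -/
def entry (n : ℕ) (t : Fin (Dim n) → ℝ) (a : ℕ) : ℝ :=
  if h : a < Dim n then t ⟨a, h⟩ else 0

/-- the product of cones
`t_1 ≥ 0`, `t_2 ≥ t_3 ≥ 0`, …, `t_{N-n+1} ≥ ⋯ ≥ t_N ≥ 0` (in `ℝ^N`, 1-based: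
for `k = 1, …, n` the chain `t_{k(k-1)/2+1} ≥ ⋯ ≥ t_{k(k-1)/2+k} ≥ 0`). -/
def chainCone (n : ℕ) : Set (Fin (Dim n) → ℝ) :=
  {t | ∀ k j, 1 ≤ k → k ≤ n → 1 ≤ j → j ≤ k →
    (if j = k then 0 else entry n t (k * (k - 1) / 2 + j)) ≤
      entry n t (k * (k - 1) / 2 + (j - 1))}

/-! A point built from weights `y` of the wires, recording at each node the difference of the
weights of the two crossing wires, gives every string inequality of a path in `G(i, k)` the same
value `y (k + 1) - y k`, so paths of different types `k` are told apart.

For paths of the same type, reverse the path in `G(i, k)`. The new orientation, read column by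
column, changes at each node by `0` or `1`: otherwise the path would run through a forbidden
fragment or visit a node twice. Since at the bottom the new orientation depends on `k` only, the
normal vectors of two paths of type `k` differ by `Λ (τ - τ')`, where `Λ` is the unitriangular
matrix of the `λ`-inequalities and `τ`, `τ'` are the `0/1` vectors of these changes. A vertex of
the cube can be separated linearly from all other vertices, and as `Λ` is invertible so can a
string inequality from all others of its type. By regularity of `λ`, scaling a point down makes
all its `λ`-inequalities strict.

Finally, taking the coordinates of `λ` for the differences `y (k + 1) - y k` gives a vertex at
which all `λ`-inequalities are equalities and all string inequalities are strict, and the inverse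
of `Λ` provides a direction that leaves the polytope across a single `λ`-inequality. -/

/-! ### Facets of polyhedra -/

lemma exists_pos_forall_mul_lt {κ : Type*} [Finite κ] (u v : κ → ℝ) (hv : ∀ i, 0 < v i) :
    ∃ ε : ℝ, 0 < ε ∧ ∀ i, ε * u i < v i := by
  have small : ∀ᶠ ε in nhdsWithin (0 : ℝ) (Set.Ioi 0), ∀ i, ε * u i < v i := by
    refine Filter.eventually_all.2 fun i => nhdsWithin_le_nhds ?_
    have lim : Filter.Tendsto (fun ε : ℝ => ε * u i) (nhds 0) (nhds (0 * u i)) :=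
      Filter.tendsto_id.mul_const (u i)
    rw [zero_mul] at lim
    exact lim.eventually (gt_mem_nhds (hv i))
  obtain ⟨ε, hlt, hpos⟩ := (small.and self_mem_nhdsWithin).exists
  exact ⟨ε, hpos, hlt⟩

section Polyhedron

variable {E ι : Type*} [AddCommGroup E] [Module ℝ E] {A : ι → E →ₗ[ℝ] ℝ} {b : ι → ℝ}

/-- The polyhedron cut out by the inequalities `A i x ≤ b i`. -/
def polyhedron (A : ι → E →ₗ[ℝ] ℝ) (b : ι → ℝ) : Set E := {x | ∀ i, A i x ≤ b i}

/-- The face of a polyhedron on which inequality `i` is an equality. -/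
def tightFace (A : ι → E →ₗ[ℝ] ℝ) (b : ι → ℝ) (i : ι) : Set E := {x ∈ polyhedron A b | A i x = b i}

lemma convex_polyhedron : Convex ℝ (polyhedron A b) := by
  rw [polyhedron, Set.ofPred_forall]
  exact convex_iInter fun i => convex_halfSpace_le (A i).isLinear (b i)

lemma convex_tightFace (i : ι) : Convex ℝ (tightFace A b i) :=
  convex_polyhedron.inter (convex_hyperplane (A i).isLinear (b i))

lemma isExtreme_tightFace (i : ι) : IsExtreme ℝ (polyhedron A b) (tightFace A b i) := by
  refine ⟨fun x hx => hx.1, ?_⟩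
  rintro x hx y hy z ⟨-, hz⟩ ⟨s, t, hs, ht, hst, rfl⟩
  refine ⟨hx, (hx i).antisymm (le_of_mul_le_mul_left ?_ hs)⟩
  simp only [map_add, map_smul, smul_eq_mul] at hz
  have hb : s * b i + t * b i = b i := by rw [← add_mul, hst, one_mul]
  linarith [mul_le_mul_of_nonneg_left (hy i) ht.le]

lemma eq_polyhedron_of_forall_lt [Finite ι] {F : Set E} (hF : IsExtreme ℝ (polyhedron A b) F)
    {p : E} (hp : p ∈ F) (hlt : ∀ i, A i p < b i) : F = polyhedron A b := by
  refine hF.1.antisymm fun x hx => ?_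
  -- Beyond `p`, the line from `x` through `p` stays in the polyhedron for a little while.
  obtain ⟨ε, hε, hbeyond⟩ := exists_pos_forall_mul_lt (fun i => A i (p - x))
    (fun i => b i - A i p) (fun i => sub_pos.2 (hlt i))
  have hy : p + ε • (p - x) ∈ polyhedron A b := fun i => by
    simp only [map_add, map_smul, smul_eq_mul]
    linarith [hbeyond i]
  refine hF.2 hx hy hp ⟨ε / (1 + ε), 1 / (1 + ε), by positivity, by positivity,
    by rw [← add_div, add_comm, div_self (by positivity)], ?_⟩
  match_scalars
  · field_simp
    ring
  · field_simp

lemma exists_subset_tightFace [Finite ι] [Nonempty ι] {F : Set E}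
    (hF : IsExtreme ℝ (polyhedron A b) F) (hconv : Convex ℝ F) (hne : F ≠ polyhedron A b) :
    ∃ i, F ⊆ tightFace A b i := by
  by_contra! hnot
  have hslack : ∀ i, ∃ g ∈ F, A i g < b i := fun i => by
    obtain ⟨g, hg, hgt⟩ := Set.not_subset.1 (hnot i)
    exact ⟨g, hg, (hF.1 hg i).lt_of_ne fun he => hgt ⟨hF.1 hg, he⟩⟩
  choose g hgF hglt using hslack
  have := Fintype.ofFinite ι
  have hcard : (0 : ℝ) < Fintype.card ι := mod_cast Fintype.card_pos
  -- The barycentre of points violating each equality once is slack for every inequality.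
  refine hne (eq_polyhedron_of_forall_lt hF (p := ∑ i, (Fintype.card ι : ℝ)⁻¹ • g i) ?_ fun i => ?_)
  · exact hconv.sum_mem (fun _ _ => by positivity) (by simp [hcard.ne']) fun i _ => hgF i
  · calc A i (∑ j, (Fintype.card ι : ℝ)⁻¹ • g j)
        = ∑ j, (Fintype.card ι : ℝ)⁻¹ * A i (g j) := by simp only [map_sum, map_smul, smul_eq_mul]
      _ < ∑ _j : ι, (Fintype.card ι : ℝ)⁻¹ * b i := by
          refine Finset.sum_lt_sum (fun j _ => ?_) ⟨i, Finset.mem_univ i, ?_⟩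
          · exact mul_le_mul_of_nonneg_left (hF.1 (hgF j) i) (by positivity)
          · exact mul_lt_mul_of_pos_left (hglt i) (by positivity)
      _ = b i := by simp [hcard.ne']

lemma exists_mem_tightFace_forall_lt {x₀ x : E} {i : ι} (hx₀ : ∀ j, A j x₀ < b j)
    (hi : b i < A i x) (hj : ∀ j, j ≠ i → A j x ≤ b j) :
    ∃ z ∈ tightFace A b i, ∀ j, j ≠ i → A j z < b j := by
  have hgap : 0 < A i x - A i x₀ := by linarith [hx₀ i]
  set θ := (b i - A i x₀) / (A i x - A i x₀)
  have hθ₀ : 0 < θ := div_pos (sub_pos.2 (hx₀ i)) hgap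
  have hθ₁ : θ < 1 := (div_lt_one hgap).2 (by linarith)
  have hθ : θ * (A i x - A i x₀) = b i - A i x₀ := div_mul_cancel₀ _ hgap.ne'
  have htight : A i ((1 - θ) • x₀ + θ • x) = b i := by
    simp only [map_add, map_smul, smul_eq_mul]
    linarith
  have hslack : ∀ j, j ≠ i → A j ((1 - θ) • x₀ + θ • x) < b j := fun j hji => by
    simp only [map_add, map_smul, smul_eq_mul]
    linarith [mul_lt_mul_of_pos_left (hx₀ j) (sub_pos.2 hθ₁),
      mul_le_mul_of_nonneg_left (hj j hji) hθ₀.le]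
  refine ⟨_, ⟨fun j => ?_, htight⟩, hslack⟩
  rcases eq_or_ne j i with rfl | hji
  exacts [htight.le, (hslack j hji).le]

lemma eq_tightFace_of_subset [Finite ι] {F : Set E} {i : ι} {z : E}
    (hF : IsExtreme ℝ (polyhedron A b) F) (hconv : Convex ℝ F) (hne : F ≠ polyhedron A b)
    (hz : z ∈ tightFace A b i) (hzlt : ∀ j, j ≠ i → A j z < b j) (hsub : tightFace A b i ⊆ F) :
    tightFace A b i = F := by
  refine hsub.antisymm fun g hg => ?_
  by_contra hgt
  have hglt : A i g < b i := (hF.1 hg i).lt_of_ne fun he => hgt ⟨hF.1 hg, he⟩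
  refine hne (eq_polyhedron_of_forall_lt hF (p := (1 / 2 : ℝ) • z + (1 / 2 : ℝ) • g)
    (hconv (hsub hz) hg (by norm_num) (by norm_num) (by norm_num)) fun j => ?_)
  simp only [map_add, map_smul, smul_eq_mul]
  rcases eq_or_ne j i with rfl | hji
  · linarith [hz.2]
  · linarith [hzlt j hji, hF.1 hg j]

lemma tightFace_injective
    (hz : ∀ i, ∃ z ∈ tightFace A b i, ∀ j, j ≠ i → A j z < b j) :
    Function.Injective (tightFace A b) := by
  intro i j hij
  by_contra hne
  obtain ⟨z, hzi, hzlt⟩ := hz i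
  exact (hzlt j (Ne.symm hne)).ne (hij ▸ hzi).2

end Polyhedron

section Facets

variable {m : ℕ} {ι : Type*} {A : ι → (Fin m → ℝ) →ₗ[ℝ] ℝ} {b : ι → ℝ}

lemma isFaceSet_tightFace (i : ι) : IsFaceSet (polyhedron A b) (tightFace A b i) :=
  ⟨isExtreme_tightFace i, convex_tightFace i⟩

lemma tightFace_ne_polyhedron {x₀ : Fin m → ℝ} (hx₀ : ∀ i, A i x₀ < b i) (i : ι) :
    tightFace A b i ≠ polyhedron A b := fun h =>
  (hx₀ i).ne (h ▸ (fun j => (hx₀ j).le : x₀ ∈ polyhedron A b) : x₀ ∈ tightFace A b i).2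

lemma setOf_isFacet_polyhedron [Finite ι] [Nonempty ι] {x₀ : Fin m → ℝ} (hx₀ : ∀ i, A i x₀ < b i)
    (hz : ∀ i, ∃ z ∈ tightFace A b i, ∀ j, j ≠ i → A j z < b j) :
    {F | IsFacet (polyhedron A b) F} = Set.range (tightFace A b) := by
  ext F
  constructor
  · rintro ⟨hF, hne, hmax⟩
    obtain ⟨i, hi⟩ := exists_subset_tightFace hF.1 hF.2 hne
    exact ⟨i, (hmax _ (isFaceSet_tightFace i) (tightFace_ne_polyhedron hx₀ i) hi).symm⟩
  · rintro ⟨i, rfl⟩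
    obtain ⟨z, hzi, hzlt⟩ := hz i
    exact ⟨isFaceSet_tightFace i, tightFace_ne_polyhedron hx₀ i,
      fun G hG hne hsub => eq_tightFace_of_subset hG.1 hG.2 hne hzi hzlt hsub⟩

theorem numFacets_polyhedron [Finite ι] [Nonempty ι] {x₀ : Fin m → ℝ} (hx₀ : ∀ i, A i x₀ < b i)
    (hirr : ∀ i, ∃ x, b i < A i x ∧ ∀ j, j ≠ i → A j x ≤ b j) :
    numFacets (polyhedron A b) = Nat.card ι := by
  have hz : ∀ i, ∃ z ∈ tightFace A b i, ∀ j, j ≠ i → A j z < b j := fun i =>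
    let ⟨_, hi, hj⟩ := hirr i
    exists_mem_tightFace_forall_lt hx₀ hi hj
  rw [numFacets, setOf_isFacet_polyhedron hx₀ hz,
    Set.ncard_range_of_injective (tightFace_injective hz)]

end Facets

/-! ### Crossings of a reduced word -/

section States

variable {n : ℕ} {w : List ℕ}

lemma stateBelow_succ {l : ℕ} (hl : l < w.length) :
    stateBelow w (l + 1) = stateBelow w l * sTrans (letterAt w (l + 1)) := by
  unfold stateBelow wordProd letterAt
  rw [← List.take_concat_get' w l hl]
  simp [hl]

lemma wireX_succ (l : ℕ) : wireX w (l + 1) = stateBelow w l (letterAt w (l + 1)) := rfl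

lemma wireY_succ (l : ℕ) : wireY w (l + 1) = stateBelow w l (letterAt w (l + 1) + 1) := rfl

lemma letterAt_succ_mem {l : ℕ} (hl : l < w.length) : letterAt w (l + 1) ∈ w := by
  simp [letterAt, hl]

lemma longestPerm_apply (k : ℕ) :
    longestPerm n k = if 1 ≤ k ∧ k ≤ n + 1 then n + 2 - k else k := rfl

lemma sTrans_lt_sTrans {a x y : ℕ} (hxy : x < y) (hne : (x, y) ≠ (a, a + 1)) :
    sTrans a x < sTrans a y := by
  rw [Ne, Prod.mk.injEq] at hne
  simp only [sTrans, Equiv.swap_apply_def]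
  split_ifs <;> omega

lemma sTrans_mem_Icc {a x : ℕ} (ha : 1 ≤ a ∧ a ≤ n) (hx : x ∈ Finset.Icc 1 (n + 1)) :
    sTrans a x ∈ Finset.Icc 1 (n + 1) := by
  simp only [sTrans, Equiv.swap_apply_def, Finset.mem_Icc] at hx ⊢
  split_ifs <;> omega

/-- The inversions `(x, y)` of a permutation on the wires `1, …, n + 1`: `x < y` and `s y < s x`. -/
def inversions (n : ℕ) (s : Equiv.Perm ℕ) : Finset (ℕ × ℕ) :=
  (Finset.Icc 1 (n + 1) ×ˢ Finset.Icc 1 (n + 1)).filter fun q => q.1 < q.2 ∧ s q.2 < s q.1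

lemma mem_inversions {s : Equiv.Perm ℕ} {q : ℕ × ℕ} : q ∈ inversions n s ↔
    (q.1 ∈ Finset.Icc 1 (n + 1) ∧ q.2 ∈ Finset.Icc 1 (n + 1)) ∧ q.1 < q.2 ∧ s q.2 < s q.1 := by
  rw [inversions, Finset.mem_filter, Finset.mem_product]

lemma inversions_one : inversions n 1 = ∅ :=
  Finset.filter_false_of_mem fun _ _ h => h.1.asymm h.2

lemma card_inversions_mul_sTrans_erase_le {a : ℕ} (ha : 1 ≤ a ∧ a ≤ n) (s : Equiv.Perm ℕ) :
    ((inversions n (s * sTrans a)).erase (a, a + 1)).card ≤ (inversions n s).card := by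
  refine Finset.card_le_card_of_injOn (Prod.map (sTrans a) (sTrans a)) ?_
    ((sTrans a).injective.prodMap (sTrans a).injective).injOn
  intro q hq
  rw [Finset.mem_coe, Finset.mem_erase, mem_inversions] at hq
  obtain ⟨hne, ⟨hx, hy⟩, hlt, hinv⟩ := hq
  exact mem_inversions.2
    ⟨⟨sTrans_mem_Icc ha hx, sTrans_mem_Icc ha hy⟩, sTrans_lt_sTrans hlt hne, hinv⟩

lemma card_inversions_mul_sTrans_le {a : ℕ} (ha : 1 ≤ a ∧ a ≤ n) (s : Equiv.Perm ℕ) :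
    (inversions n (s * sTrans a)).card ≤
      (inversions n s).card + if s a < s (a + 1) then 1 else 0 := by
  have herase := card_inversions_mul_sTrans_erase_le ha s
  split_ifs with hlt
  · have := Finset.pred_card_le_card_erase (s := inversions n (s * sTrans a)) (a := (a, a + 1))
    omega
  · have hnot : (a, a + 1) ∉ inversions n (s * sTrans a) := fun h =>
      hlt (by simpa [sTrans] using (mem_inversions.1 h).2.2)
    rwa [Finset.erase_eq_of_notMem hnot] at herase

lemma card_inversions_longestPerm : (inversions n (longestPerm n)).card = Dim n := by
  have hcol : ∀ y ∈ Finset.Icc 1 (n + 1), (∑ x ∈ Finset.Icc 1 (n + 1),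
      if x < y ∧ longestPerm n y < longestPerm n x then 1 else 0) = y - 1 := by
    intro y hy
    rw [← Finset.card_filter, ← Nat.card_Ico]
    congr 1
    ext x
    rw [Finset.mem_filter]
    simp only [Finset.mem_Icc, longestPerm_apply, Finset.mem_Ico] at hy ⊢
    split_ifs <;> omega
  rw [inversions, Finset.card_filter, Finset.sum_product_right, Finset.sum_congr rfl hcol,
    ← Finset.Ico_add_one_right_eq_Icc, Finset.sum_Ico_eq_sum_range]
  simp only [Nat.add_sub_cancel, Nat.add_sub_cancel_left]
  rw [Finset.sum_range_id, Nat.add_sub_cancel, Nat.mul_comm]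

lemma card_inversions_stateBelow_le (hw : ∀ a ∈ w, 1 ≤ a ∧ a ≤ n) {l : ℕ} (hl : l ≤ w.length) :
    (inversions n (stateBelow w l)).card ≤
      ((Finset.range l).filter fun q => wireX w (q + 1) < wireY w (q + 1)).card := by
  induction l with
  | zero =>
    have h1 : stateBelow w 0 = 1 := rfl
    simp [h1, inversions_one]
  | succ l ih =>
    rw [stateBelow_succ hl, Finset.card_filter, Finset.sum_range_succ, ← Finset.card_filter]
    exact (card_inversions_mul_sTrans_le (hw _ (letterAt_succ_mem hl)) _).trans
      (Nat.add_le_add_right (ih (Nat.le_of_succ_le hl)) _)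

lemma IsReduced.length_eq (hw : IsReduced n w) : w.length = Dim n := hw.1

lemma IsReduced.stateBelow_length (hw : IsReduced n w) :
    stateBelow w w.length = longestPerm n := by
  rw [stateBelow, List.take_length, hw.2.2]

lemma IsReduced.wireX_lt_wireY (hw : IsReduced n w) {j : ℕ} (hj : ValidNode w j) :
    wireX w j < wireY w j := by
  have hcard : (Finset.range w.length).card ≤
      ((Finset.range w.length).filter fun q => wireX w (q + 1) < wireY w (q + 1)).card := by
    calc (Finset.range w.length).card = (inversions n (stateBelow w w.length)).card := by
          rw [Finset.card_range, hw.stateBelow_length, card_inversions_longestPerm,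
            hw.length_eq]
      _ ≤ _ := card_inversions_stateBelow_le hw.2.1 le_rfl
  have hall := Finset.eq_of_subset_of_card_le (Finset.filter_subset _ _) hcard
  obtain ⟨l, rfl⟩ : ∃ l, j = l + 1 := ⟨j - 1, (Nat.sub_add_cancel hj.1).symm⟩
  exact (Finset.filter_eq_self.1 hall) l (Finset.mem_range.2 hj.2)

end States

/-! ### Conserved weightings of the wires and the `λ`-inequalities -/

section Conserved

variable {n : ℕ} {w : List ℕ} {G : ℕ → ℕ → ℝ}

lemma stateBelow_succ_left {l : ℕ} (hl : l < w.length) :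
    stateBelow w (l + 1) (letterAt w (l + 1)) = wireY w (l + 1) := by
  rw [stateBelow_succ hl, Equiv.Perm.mul_apply, sTrans, Equiv.swap_apply_left, wireY_succ]

lemma stateBelow_succ_right {l : ℕ} (hl : l < w.length) :
    stateBelow w (l + 1) (letterAt w (l + 1) + 1) = wireX w (l + 1) := by
  rw [stateBelow_succ hl, Equiv.Perm.mul_apply, sTrans, Equiv.swap_apply_right, wireX_succ]

lemma stateBelow_succ_of_ne {l c : ℕ} (hl : l < w.length) (h₁ : c ≠ letterAt w (l + 1))
    (h₂ : c ≠ letterAt w (l + 1) + 1) : stateBelow w (l + 1) c = stateBelow w l c := by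
  rw [stateBelow_succ hl, Equiv.Perm.mul_apply, sTrans, Equiv.swap_apply_of_ne_of_ne h₁ h₂]

lemma not_nodeOnWire_stateBelow {l c : ℕ} (h₁ : c ≠ letterAt w (l + 1))
    (h₂ : c ≠ letterAt w (l + 1) + 1) : ¬ NodeOnWire w (l + 1) (stateBelow w l c) := by
  rw [NodeOnWire, wireX_succ, wireY_succ, EmbeddingLike.apply_eq_iff_eq,
    EmbeddingLike.apply_eq_iff_eq]
  exact not_or.2 ⟨h₁.symm, h₂.symm⟩

/-- A real weighting `G l q` of the wires `q` at the levels `l` of the wiring diagram is conserved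
if across every node only the two crossing wires change weight, and their total weight does not
change. Level `l` is the height between the nodes `t_l` and `t_{l+1}`. -/
def IsConserved (w : List ℕ) (G : ℕ → ℕ → ℝ) : Prop :=
  ∀ l < w.length, (∀ q, ¬ NodeOnWire w (l + 1) q → G l q = G (l + 1) q) ∧
    G l (wireX w (l + 1)) + G l (wireY w (l + 1)) =
      G (l + 1) (wireX w (l + 1)) + G (l + 1) (wireY w (l + 1))

/-- The change, across the node `t_{l+1}`, of the weight found in the column `i_{l+1}`. -/
def turning (w : List ℕ) (G : ℕ → ℕ → ℝ) (l : ℕ) : ℝ :=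
  G l (wireX w (l + 1)) - G (l + 1) (wireY w (l + 1))

/-- The simple root `α_a = e_a - e_{a+1}` as a function of the column `c`. -/
def simpleRoot (a c : ℕ) : ℝ := (if c = a then 1 else 0) - if c = a + 1 then 1 else 0

lemma simpleRoot_sub_simpleRoot (j k : ℕ) :
    simpleRoot (letterAt w k) (letterAt w j) - simpleRoot (letterAt w k) (letterAt w j + 1) =
      -lamCoeff w j k := by
  unfold simpleRoot lamCoeff
  split_ifs <;> first | omega | norm_num

lemma IsConserved.apply_stateBelow (hG : IsConserved w G) {l : ℕ} (hl : l < w.length) (c : ℕ) :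
    G l (stateBelow w l c) =
      G (l + 1) (stateBelow w (l + 1) c) + turning w G l * simpleRoot (letterAt w (l + 1)) c := by
  obtain ⟨hoff, hsum⟩ := hG l hl
  by_cases hX : c = letterAt w (l + 1)
  · subst hX
    simp [stateBelow_succ_left hl, simpleRoot, turning, wireX_succ]
  by_cases hY : c = letterAt w (l + 1) + 1
  · subst hY
    rw [stateBelow_succ_right hl, ← wireY_succ]
    simp only [simpleRoot, turning, Nat.add_eq_left, one_ne_zero, if_false, if_true]
    linarith
  · rw [stateBelow_succ_of_ne hl hX hY, hoff _ (not_nodeOnWire_stateBelow hX hY)]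
    simp [simpleRoot, hX, hY]

lemma IsConserved.apply_stateBelow_eq_sum (hG : IsConserved w G) {l : ℕ} (hl : l ≤ w.length)
    (c : ℕ) : G l (stateBelow w l c) = G w.length (stateBelow w w.length c) +
      ∑ k ∈ Finset.Ico l w.length, turning w G k * simpleRoot (letterAt w (k + 1)) c := by
  induction hl using Nat.decreasingInduction with
  | self => simp
  | of_succ l hl ih =>
    rw [hG.apply_stateBelow hl, ih, Finset.sum_eq_sum_Ico_succ_bot hl]
    ring

/-- The matrix of the left-hand sides `t_j - ∑_{k > j} a_k t_k` of the `λ`-inequalities. -/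
def lamMatrix (n : ℕ) (w : List ℕ) : Matrix (Fin (Dim n)) (Fin (Dim n)) ℝ :=
  1 - Matrix.of fun j k : Fin (Dim n) => if (j : ℕ) < (k : ℕ) then lamCoeff w (j + 1) (k + 1) else 0

/-- The right-hand sides `λ_{i_j}` of the `λ`-inequalities. -/
def weightVec (n : ℕ) (w : List ℕ) (lam : ℕ → ℤ) : Fin (Dim n) → ℝ :=
  fun j => lam (letterAt w (j + 1))

lemma lamMatrix_mulVec_apply (t : Fin (Dim n) → ℝ) (j : Fin (Dim n)) :
    (lamMatrix n w).mulVec t j = t j - ∑ k : Fin (Dim n),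
      (if (j : ℕ) < (k : ℕ) then lamCoeff w (j + 1) (k + 1) else 0) * t k := by
  rw [lamMatrix, Matrix.sub_mulVec, Matrix.one_mulVec]
  rfl

lemma lamIneq_iff {lam : ℕ → ℤ} {j : Fin (Dim n)} {t : Fin (Dim n) → ℝ} :
    LamIneq n w lam j t ↔ (lamMatrix n w).mulVec t j ≤ weightVec n w lam j := by
  rw [lamMatrix_mulVec_apply, sub_le_iff_le_add]
  rfl

lemma det_lamMatrix : (lamMatrix n w).det = 1 := by
  have htri : (lamMatrix n w).IsUpperTriangular := fun j k (hkj : k < j) => by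
    simp [lamMatrix, hkj.ne', hkj.not_gt]
  rw [Matrix.det_of_isUpperTriangular htri]
  simp [lamMatrix]

lemma lamMatrix_mulVec_surjective : Function.Surjective (lamMatrix n w).mulVec := by
  rw [Matrix.mulVec_surjective_iff_isUnit, Matrix.isUnit_iff_isUnit_det, det_lamMatrix]
  exact isUnit_one

lemma lamMatrix_vecMul_surjective :
    Function.Surjective fun t => Matrix.vecMul t (lamMatrix n w) := by
  rw [Matrix.vecMul_surjective_iff_isUnit, Matrix.isUnit_iff_isUnit_det, det_lamMatrix]
  exact isUnit_one

lemma IsConserved.sum_lamCoeff_mul_turning (hG : IsConserved w G) {j : ℕ} (hj : j < w.length) :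
    ∑ k ∈ Finset.Ico (j + 1) w.length, lamCoeff w (j + 1) (k + 1) * turning w G k =
      G (j + 1) (wireX w (j + 1)) - G (j + 1) (wireY w (j + 1)) +
        G w.length (stateBelow w w.length (letterAt w (j + 1))) -
        G w.length (stateBelow w w.length (letterAt w (j + 1) + 1)) := by
  have hleft := hG.apply_stateBelow_eq_sum hj (letterAt w (j + 1))
  have hright := hG.apply_stateBelow_eq_sum hj (letterAt w (j + 1) + 1)
  rw [stateBelow_succ_left hj] at hleft
  rw [stateBelow_succ_right hj] at hright
  have hroots : ∑ k ∈ Finset.Ico (j + 1) w.length, lamCoeff w (j + 1) (k + 1) * turning w G k =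
      (∑ k ∈ Finset.Ico (j + 1) w.length,
        turning w G k * simpleRoot (letterAt w (k + 1)) (letterAt w (j + 1) + 1)) -
      ∑ k ∈ Finset.Ico (j + 1) w.length,
        turning w G k * simpleRoot (letterAt w (k + 1)) (letterAt w (j + 1)) := by
    rw [← Finset.sum_sub_distrib]
    refine Finset.sum_congr rfl fun k _ => ?_
    rw [← neg_eq_iff_eq_neg.2 (simpleRoot_sub_simpleRoot (j + 1) (k + 1))]
    ring
  linarith

lemma IsReduced.stateBelow_letterAt (hw : IsReduced n w) {j : ℕ} (hj : j < w.length) :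
    stateBelow w w.length (letterAt w (j + 1)) = n + 2 - letterAt w (j + 1) ∧
      stateBelow w w.length (letterAt w (j + 1) + 1) = n + 1 - letterAt w (j + 1) := by
  have hmem := hw.2.1 _ (letterAt_succ_mem hj)
  rw [hw.stateBelow_length, longestPerm_apply, longestPerm_apply]
  constructor <;> split_ifs <;> omega

lemma IsConserved.lamMatrix_mulVec_turning (hG : IsConserved w G) (hw : IsReduced n w)
    (j : Fin (Dim n)) : (lamMatrix n w).mulVec (fun l => turning w G l) j =
      G j (wireX w (j + 1)) - G (j + 1) (wireX w (j + 1)) +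
        G w.length (n + 1 - letterAt w (j + 1)) - G w.length (n + 2 - letterAt w (j + 1)) := by
  have hj : (j : ℕ) < w.length := j.2.trans_eq hw.length_eq.symm
  have hsum : ∑ k : Fin (Dim n),
      (if (j : ℕ) < (k : ℕ) then lamCoeff w (j + 1) (k + 1) else 0) * turning w G k =
      ∑ k ∈ Finset.Ico (j + 1 : ℕ) w.length, lamCoeff w (j + 1) (k + 1) * turning w G k := by
    rw [Fin.sum_univ_eq_sum_range fun k =>
      (if (j : ℕ) < k then lamCoeff w (j + 1) (k + 1) else 0) * turning w G k]
    simp only [hw.length_eq, ite_mul, zero_mul]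
    rw [← Finset.sum_filter]
    congr 1
    ext k
    simp only [Finset.mem_filter, Finset.mem_range, Finset.mem_Ico]
    omega
  obtain ⟨hleft, hright⟩ := hw.stateBelow_letterAt hj
  rw [lamMatrix_mulVec_apply, hsum, hG.sum_lamCoeff_mul_turning hj, hleft, hright, turning]
  ring

/-- The difference of the weights `y` of the two wires crossing at the node `t_j`. -/
def crossingGap (w : List ℕ) (y : ℕ → ℝ) (j : ℕ) : ℝ := y (wireY w j) - y (wireX w j)

/-- The point of `ℝ^N` recording at every node the difference of the weights `y` of the two wires
crossing there. -/
def crossingVec (n : ℕ) (w : List ℕ) (y : ℕ → ℝ) : Fin (Dim n) → ℝ :=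
  fun j => crossingGap w y (j + 1)

lemma IsReduced.lamMatrix_mulVec_crossingVec (hw : IsReduced n w) (y : ℕ → ℝ) (j : Fin (Dim n)) :
    (lamMatrix n w).mulVec (crossingVec n w y) j =
      y (n + 2 - letterAt w (j + 1)) - y (n + 1 - letterAt w (j + 1)) := by
  have hcons : IsConserved w fun _ q => -y q := fun _ _ => ⟨fun _ _ => rfl, rfl⟩
  have hturn : crossingVec n w y = fun l : Fin (Dim n) => turning w (fun _ q => -y q) l :=
    funext fun _ => (neg_sub_neg _ _).symm
  rw [hturn, hcons.lamMatrix_mulVec_turning hw]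
  ring

end Conserved

/-! ### String inequalities at crossing vectors -/

section Pairing

variable {n : ℕ} {w : List ℕ}

lemma otherWire_wireX (j : ℕ) : otherWire w j (wireX w j) = wireY w j := if_pos rfl

lemma otherWire_wireY {j : ℕ} (hj : wireX w j ≠ wireY w j) :
    otherWire w j (wireY w j) = wireX w j := if_neg hj

/-- The contribution `±1` to the string inequality of a switch at the node `t_j` away from the wire
`ℓ_r`. -/
def switchSign (w : List ℕ) (j r : ℕ) : ℝ := if r < otherWire w j r then 1 else -1

lemma coeff_nil (r j : ℕ) : coeff w r [] j = 0 := rfl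

lemma coeff_cons (r m : ℕ) (ms : List ℕ) (j : ℕ) : coeff w r (m :: ms) j =
    (if m = j then switchSign w m r else 0) + coeff w (otherWire w m r) ms j := rfl

lemma switchSign_mul_crossingGap {j r : ℕ} (hj : wireX w j < wireY w j) (hr : NodeOnWire w j r)
    (y : ℕ → ℝ) : switchSign w j r * crossingGap w y j = y (otherWire w j r) - y r := by
  unfold switchSign crossingGap
  rcases hr with rfl | rfl
  · rw [otherWire_wireX, if_pos hj, one_mul]
  · rw [otherWire_wireY hj.ne, if_neg hj.not_gt, neg_one_mul, neg_sub]

/-- The part of the string inequality of the path `(r, ms)` coming from the nodes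
`t_1, …, t_l`, evaluated at the crossing vector of the weights `y`. -/
def pathPairing (w : List ℕ) (y : ℕ → ℝ) (l r : ℕ) (ms : List ℕ) : ℝ :=
  ∑ i ∈ Finset.range l, coeff w r ms (i + 1) * crossingGap w y (i + 1)

lemma pathPairing_nil (y : ℕ → ℝ) (l r : ℕ) : pathPairing w y l r [] = 0 := by
  simp only [pathPairing, coeff_nil, zero_mul, Finset.sum_const_zero]

lemma pathPairing_succ (y : ℕ → ℝ) (l r : ℕ) (ms : List ℕ) : pathPairing w y (l + 1) r ms =
    pathPairing w y l r ms + coeff w r ms (l + 1) * crossingGap w y (l + 1) :=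
  Finset.sum_range_succ _ _

lemma pathPairing_cons (hw : IsReduced n w) {m r : ℕ} (hm : ValidNode w m)
    (hr : NodeOnWire w m r) (y : ℕ → ℝ) (l : ℕ) (ms : List ℕ) :
    pathPairing w y l r (m :: ms) = (if m ≤ l then y (otherWire w m r) - y r else 0) +
      pathPairing w y l (otherWire w m r) ms := by
  have hhead : ∑ i ∈ Finset.range l,
      (if m = i + 1 then switchSign w m r else 0) * crossingGap w y (i + 1) =
      if m ≤ l then y (otherWire w m r) - y r else 0 := by
    obtain ⟨i, rfl⟩ : ∃ i, m = i + 1 := ⟨m - 1, (Nat.sub_add_cancel hm.1).symm⟩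
    simp only [add_left_inj, ite_mul, zero_mul, Finset.sum_ite_eq, Finset.mem_range,
      switchSign_mul_crossingGap (hw.wireX_lt_wireY hm) hr, Nat.add_one_le_iff]
  simp only [pathPairing, coeff_cons, add_mul, Finset.sum_add_distrib, hhead]

lemma pathPairing_length_of_travelOK (hw : IsReduced n w) (y : ℕ → ℝ) {k r a : ℕ} {ms : List ℕ}
    (h : TravelOK w k r a ms) : pathPairing w y w.length r ms = y (k + 1) - y r := by
  induction ms generalizing r a with
  | nil => rw [pathPairing_nil, h.1, sub_self]
  | cons m ms ih =>
    obtain ⟨hm, hr, -, -, hrest⟩ := h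
    rw [pathPairing_cons hw hm hr, ih hrest, if_pos hm.2]
    ring

lemma stringIneq_crossingVec (hw : IsReduced n w) (y : ℕ → ℝ) (p : ℕ × List ℕ) :
    stringIneq n w p (crossingVec n w y) = pathPairing w y w.length p.1 p.2 := by
  rw [pathPairing, hw.length_eq, ← Fin.sum_univ_eq_sum_range
    (fun i => coeff w p.1 p.2 (i + 1) * crossingGap w y (i + 1))]
  rfl

end Pairing

/-! ### Rigorous paths as travels from the bottom -/

section Travel

variable {n k j r a : ℕ} {w ms : List ℕ}

lemma mem_nodesOn : j ∈ nodesOn w r ↔ ValidNode w j ∧ NodeOnWire w j r := by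
  simp only [nodesOn, ValidNode, List.mem_filter, List.mem_map, List.mem_range, decide_eq_true_eq]
  refine and_congr_left fun _ => ⟨?_, fun h => ⟨j - 1, by omega, Nat.sub_add_cancel h.1⟩⟩
  rintro ⟨i, hi, rfl⟩
  exact ⟨Nat.le_add_left 1 i, hi⟩

lemma nodup_nodesOn : (nodesOn w r).Nodup :=
  (List.nodup_range.map (add_left_injective 1)).filter _

lemma nodup_segList {b : ℕ} : (segList w r a b).Nodup := nodup_nodesOn.filter _

lemma nodup_tailList : (tailList w r a).Nodup := nodup_nodesOn.filter _

lemma segList_subset_nodesOn {b : ℕ} : segList w r a b ⊆ nodesOn w r := List.filter_subset_self _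

lemma tailList_subset_nodesOn : tailList w r a ⊆ nodesOn w r := List.filter_subset_self _

lemma mem_segList {b : ℕ} :
    j ∈ segList w r a b ↔ j ∈ nodesOn w r ∧ min a b < j ∧ j < max a b := by
  rw [segList, List.mem_filter, decide_eq_true_eq]

lemma mem_tailList : j ∈ tailList w r a ↔ j ∈ nodesOn w r ∧ a < j := by
  rw [tailList, List.mem_filter, decide_eq_true_eq]

lemma count_segList (hj : j ∈ nodesOn w r) (b : ℕ) :
    (segList w r a b).count j = if min a b < j ∧ j < max a b then 1 else 0 := by
  simp only [nodup_segList.count, mem_segList, hj, true_and]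

lemma count_tailList (hj : j ∈ nodesOn w r) :
    (tailList w r a).count j = if a < j then 1 else 0 := by
  simp only [nodup_tailList.count, mem_tailList, hj, true_and]

lemma segList_length_add_one (ha : a ≤ w.length) :
    segList w r (w.length + 1) a = tailList w r a := by
  refine List.filter_congr fun j hj => decide_eq_decide.2 ?_
  have := (mem_nodesOn.1 hj).1.2
  omega

lemma IsGPPath.travelOK (h : IsGPPath n w k ms) : TravelOK w k k (w.length + 1) ms := by
  obtain ⟨-, -, hms, -⟩ := h
  cases ms with
  | nil => exact hms.elim
  | cons m ms =>
    obtain ⟨hm, hk, hstart, hrest⟩ := hms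
    refine ⟨hm, hk, ?_, ?_, hrest⟩
    · rw [if_pos le_rfl]
      exact Nat.lt_succ_of_le hm.2
    · rwa [segList_length_add_one hm.2]

lemma IsGPPath.nodup_visitTail (h : IsGPPath n w k ms) :
    (visitTail w k (w.length + 1) ms).Nodup := by
  obtain ⟨-, -, hms, hnd⟩ := h
  cases ms with
  | nil => exact hms.elim
  | cons m ms => rwa [visitTail, segList_length_add_one hms.1.2]

lemma stringIneq_crossingVec_of_mem_GP (hw : IsReduced n w) (y : ℕ → ℝ) {p : ℕ × List ℕ}
    (hp : p ∈ GP n w) : stringIneq n w p (crossingVec n w y) = y (p.1 + 1) - y p.1 := by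
  rw [stringIneq_crossingVec hw, pathPairing_length_of_travelOK hw y (IsGPPath.travelOK hp)]

end Travel

/-! ### Visits of a node -/

section Visits

variable {n k j q r a : ℕ} {w ms : List ℕ}

/-- The number of times the path `(r, ms)`, starting at `t_a`, passes straight through the node
`t_j` along the wire `ℓ_q`. -/
def straightCount (w : List ℕ) (j q : ℕ) : ℕ → ℕ → List ℕ → ℕ
  | r, a, [] => if r = q then (tailList w r a).count j else 0
  | r, a, m :: ms => (if r = q then (segList w r a m).count j else 0) +
      straightCount w j q (otherWire w m r) m ms

/-- The number of times the path `(r, ms)` switches at the node `t_j` away from the wire `ℓ_q`. -/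
def turnCount (w : List ℕ) (j q : ℕ) : ℕ → List ℕ → ℕ
  | _, [] => 0
  | r, m :: ms => (if m = j ∧ r = q then 1 else 0) + turnCount w j q (otherWire w m r) ms

lemma straightCount_eq_zero (hj : Forbidden w k j q) (h : TravelOK w k r a ms) :
    straightCount w j q r a ms = 0 := by
  induction ms generalizing r a with
  | nil =>
    refine ite_eq_right_iff.2 ?_
    rintro rfl
    exact List.count_eq_zero.2 fun hmem => h.2 j hmem hj
  | cons m ms ih =>
    obtain ⟨-, -, -, hseg, hrest⟩ := h
    rw [straightCount, ih hrest, add_zero]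
    refine ite_eq_right_iff.2 ?_
    rintro rfl
    exact List.count_eq_zero.2 fun hmem => hseg j hmem hj

lemma coeff_eq_turnCount_sub (hj : wireX w j < wireY w j) (h : TravelOK w k r a ms) :
    coeff w r ms j = (turnCount w j (wireX w j) r ms : ℝ) - turnCount w j (wireY w j) r ms := by
  induction ms generalizing r a with
  | nil => simp only [coeff_nil, turnCount, Nat.cast_zero, sub_self]
  | cons m ms ih =>
    obtain ⟨-, hr, -, -, hrest⟩ := h
    rw [coeff_cons, ih hrest, turnCount, turnCount]
    by_cases hm : m = j
    · subst hm
      rcases hr with rfl | rfl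
      · simp only [switchSign, otherWire_wireX, hj, hj.ne, if_true, and_true, and_false, if_false]
        push_cast
        ring
      · simp only [switchSign, otherWire_wireY hj.ne, hj.not_gt, hj.ne', if_true, and_true,
          and_false, if_false]
        push_cast
        ring
    · simp only [hm, false_and, if_false, zero_add]

lemma ite_wireX_add_ite_wireY (hj : wireX w j ≠ wireY w j) (hr : NodeOnWire w j r) (c : ℕ) :
    (if r = wireX w j then c else 0) + (if r = wireY w j then c else 0) = c := by
  rcases hr with rfl | rfl
  · rw [if_pos rfl, if_neg hj, add_zero]
  · rw [if_neg hj.symm, if_pos rfl, zero_add]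

lemma ite_wireX_add_ite_wireY_count (hj : wireX w j ≠ wireY w j) {l : List ℕ}
    (hl : l ⊆ nodesOn w r) :
    (if r = wireX w j then l.count j else 0) + (if r = wireY w j then l.count j else 0) =
      l.count j := by
  by_cases hmem : j ∈ l
  · exact ite_wireX_add_ite_wireY hj (mem_nodesOn.1 (hl hmem)).2 _
  · simp only [List.count_eq_zero.2 hmem, ite_self]

lemma count_visitTail (hj : wireX w j ≠ wireY w j) (h : TravelOK w k r a ms) :
    (visitTail w r a ms).count j =
      straightCount w j (wireX w j) r a ms + straightCount w j (wireY w j) r a ms +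
        turnCount w j (wireX w j) r ms + turnCount w j (wireY w j) r ms := by
  induction ms generalizing r a with
  | nil =>
    simp only [visitTail, straightCount, turnCount, add_zero]
    exact (ite_wireX_add_ite_wireY_count hj tailList_subset_nodesOn).symm
  | cons m ms ih =>
    obtain ⟨-, hr, -, -, hrest⟩ := h
    have hseg := ite_wireX_add_ite_wireY_count hj
      (segList_subset_nodesOn : segList w r a m ⊆ nodesOn w r)
    have hturn : (if m = j ∧ r = wireX w j then 1 else 0) +
        (if m = j ∧ r = wireY w j then 1 else 0) = if m = j then 1 else 0 := by
      by_cases hm : m = j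
      · subst hm
        simpa only [true_and, if_true] using ite_wireX_add_ite_wireY hj hr 1
      · simp only [hm, false_and, if_false]
    simp only [visitTail, straightCount, turnCount, List.count_append, List.count_cons,
      beq_iff_eq, ih hrest]
    linarith

lemma pathPairing_single_upward (hw : IsReduced n w) (hq : q ≤ k) (hj : j ∈ nodesOn w q)
    (h : TravelOK w k r a ms) :
    pathPairing w (Pi.single q 1) j r ms + (if r = q ∧ a ≤ j then 1 else 0) =
      -((straightCount w j q r a ms : ℝ) + turnCount w j q r ms) := by
  induction ms generalizing r a with
  | nil =>
    have hr : r ≠ q := by rw [h.1]; omega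
    simp [pathPairing_nil, straightCount, turnCount, hr]
  | cons m ms ih =>
    obtain ⟨hm, hr, hdir, -, hrest⟩ := h
    have := ih hrest
    rw [pathPairing_cons hw hm hr, straightCount, turnCount]
    by_cases hrq : r = q
    · subst hrq
      rw [if_pos hq] at hdir
      simp only [Pi.single_apply, count_segList hj, true_and, and_true] at this ⊢
      push_cast
      split_ifs at this ⊢ <;> first | omega | linarith
    · simp only [Pi.single_apply, hrq, false_and, and_false, if_false, Nat.cast_add,
        Nat.cast_zero] at this ⊢
      split_ifs at this ⊢ <;> first | omega | linarith

lemma pathPairing_single_downward (hw : IsReduced n w) {l : ℕ} (hq : k < q)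
    (hj : l + 1 ∈ nodesOn w q) (h : TravelOK w k r a ms) :
    pathPairing w (Pi.single q 1) l r ms + (if r = q ∧ a ≤ l then 1 else 0) =
      straightCount w (l + 1) q r a ms + turnCount w (l + 1) q r ms := by
  induction ms generalizing r a with
  | nil =>
    rw [pathPairing_nil, straightCount, turnCount]
    by_cases hrq : r = q
    · subst hrq
      simp only [count_tailList hj, true_and, if_true]
      push_cast
      split_ifs <;> first | omega | linarith
    · simp [hrq]
  | cons m ms ih =>
    obtain ⟨hm, hr, hdir, -, hrest⟩ := h
    have := ih hrest
    rw [pathPairing_cons hw hm hr, straightCount, turnCount]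
    by_cases hrq : r = q
    · subst hrq
      rw [if_neg hq.not_ge] at hdir
      simp only [Pi.single_apply, count_segList hj, true_and, and_true] at this ⊢
      push_cast
      split_ifs at this ⊢ <;> first | omega | linarith
    · simp only [Pi.single_apply, hrq, false_and, and_false, if_false, Nat.cast_add,
        Nat.cast_zero] at this ⊢
      split_ifs at this ⊢ <;> first | omega | linarith

end Visits

/-! ### Trails -/

section Trails

variable {n k l q : ℕ} {w ms : List ℕ}

/-- The orientation (`1` for upward, `0` for downward) of the wire `ℓ_q` at level `l` once the path
`(k, ms)` has been reversed in `G(i, k)`. It is computed downwards from the top: the orientation of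
the wires crossing at a node where the path switches is exchanged there. -/
def reversedOrient (w : List ℕ) (k : ℕ) (ms : List ℕ) (l q : ℕ) : ℝ :=
  (if q ≤ k then 1 else 0) + pathPairing w (Pi.single q 1) l k ms

lemma crossingGap_single_of_not_nodeOnWire {j : ℕ} (hq : ¬ NodeOnWire w j q) :
    crossingGap w (Pi.single q 1) j = 0 := by
  obtain ⟨hX, hY⟩ := not_or.1 hq
  rw [crossingGap, Pi.single_eq_of_ne hX, Pi.single_eq_of_ne hY, sub_zero]

lemma crossingGap_single_wireX {j : ℕ} (hj : wireX w j ≠ wireY w j) :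
    crossingGap w (Pi.single (wireX w j) 1) j = -1 := by
  rw [crossingGap, Pi.single_eq_same, Pi.single_eq_of_ne hj.symm, zero_sub]

lemma crossingGap_single_wireY {j : ℕ} (hj : wireX w j ≠ wireY w j) :
    crossingGap w (Pi.single (wireY w j) 1) j = 1 := by
  rw [crossingGap, Pi.single_eq_same, Pi.single_eq_of_ne hj, sub_zero]

lemma reversedOrient_succ : reversedOrient w k ms (l + 1) q =
    reversedOrient w k ms l q + coeff w k ms (l + 1) * crossingGap w (Pi.single q 1) (l + 1) := by
  rw [reversedOrient, pathPairing_succ, reversedOrient, add_assoc]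

lemma reversedOrient_succ_wireX (hl : wireX w (l + 1) ≠ wireY w (l + 1)) :
    reversedOrient w k ms (l + 1) (wireX w (l + 1)) =
      reversedOrient w k ms l (wireX w (l + 1)) - coeff w k ms (l + 1) := by
  rw [reversedOrient_succ, crossingGap_single_wireX hl, mul_neg_one, sub_eq_add_neg]

lemma reversedOrient_succ_wireY (hl : wireX w (l + 1) ≠ wireY w (l + 1)) :
    reversedOrient w k ms (l + 1) (wireY w (l + 1)) =
      reversedOrient w k ms l (wireY w (l + 1)) + coeff w k ms (l + 1) := by
  rw [reversedOrient_succ, crossingGap_single_wireY hl, mul_one]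

lemma IsReduced.isConserved_reversedOrient (hw : IsReduced n w) (k : ℕ) (ms : List ℕ) :
    IsConserved w (reversedOrient w k ms) := by
  intro l hl
  have hne := (hw.wireX_lt_wireY ⟨Nat.le_add_left 1 l, hl⟩).ne
  refine ⟨fun q hq => ?_, ?_⟩
  · rw [reversedOrient_succ, crossingGap_single_of_not_nodeOnWire hq, mul_zero, add_zero]
  · rw [reversedOrient_succ_wireX hne, reversedOrient_succ_wireY hne]
    ring

lemma reversedOrient_length (hw : IsReduced n w) (h : IsGPPath n w k ms) :
    reversedOrient w k ms w.length q =
      (if q ≤ k then 1 else 0) +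
        ((Pi.single q 1 : ℕ → ℝ) (k + 1) - (Pi.single q 1 : ℕ → ℝ) k) := by
  rw [reversedOrient, pathPairing_length_of_travelOK hw _ h.travelOK]

lemma reversedOrient_of_le (hw : IsReduced n w) (h : IsGPPath n w k ms) (hq : q ≤ k)
    (hl : l ∈ nodesOn w q) : reversedOrient w k ms l q =
      1 - ((straightCount w l q k (w.length + 1) ms : ℝ) + turnCount w l q k ms) := by
  have hflow := pathPairing_single_upward hw hq hl h.travelOK
  have hlen := (mem_nodesOn.1 hl).1.2
  rw [if_neg (by omega), add_zero] at hflow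
  rw [reversedOrient, if_pos hq, hflow, sub_eq_add_neg]

lemma reversedOrient_of_lt (hw : IsReduced n w) (h : IsGPPath n w k ms) (hq : k < q)
    (hl : l + 1 ∈ nodesOn w q) : reversedOrient w k ms l q =
      straightCount w (l + 1) q k (w.length + 1) ms + turnCount w (l + 1) q k ms := by
  have hflow := pathPairing_single_downward hw hq hl h.travelOK
  have hlen := (mem_nodesOn.1 hl).1.2
  rw [if_neg (by omega), add_zero] at hflow
  rw [reversedOrient, if_neg hq.not_ge, hflow, zero_add]

/-- The trail of a path: the amount by which reversing the path turns the wires at each node. -/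
def trailVec (n : ℕ) (w : List ℕ) (p : ℕ × List ℕ) : Fin (Dim n) → ℝ :=
  fun j => turning w (reversedOrient w p.1 p.2) j

lemma turning_reversedOrient (hw : IsReduced n w) (h : IsGPPath n w k ms) (hl : l < w.length) :
    turning w (reversedOrient w k ms) l =
      if wireY w (l + 1) ≤ k then
        (straightCount w (l + 1) (wireY w (l + 1)) k (w.length + 1) ms : ℝ)
      else if wireX w (l + 1) ≤ k then
        1 - ((visitTail w k (w.length + 1) ms).count (l + 1) : ℝ)
      else (straightCount w (l + 1) (wireX w (l + 1)) k (w.length + 1) ms : ℝ) := by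
  have hvalid : ValidNode w (l + 1) := ⟨Nat.le_add_left 1 l, hl⟩
  have hlt := hw.wireX_lt_wireY hvalid
  have hX : l + 1 ∈ nodesOn w (wireX w (l + 1)) := mem_nodesOn.2 ⟨hvalid, Or.inl rfl⟩
  have hY : l + 1 ∈ nodesOn w (wireY w (l + 1)) := mem_nodesOn.2 ⟨hvalid, Or.inr rfl⟩
  have hcoeff := coeff_eq_turnCount_sub hlt h.travelOK
  have hsuccX := reversedOrient_succ_wireX (k := k) (ms := ms) hlt.ne
  have hsuccY := reversedOrient_succ_wireY (k := k) (ms := ms) hlt.ne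
  rw [turning]
  split_ifs with hYk hXk
  · have hforbidden : Forbidden w k (l + 1) (wireX w (l + 1)) := by
      rw [Forbidden, otherWire_wireX]
      exact Or.inl ⟨hlt.le.trans hYk, hYk, hlt⟩
    have hstraight := straightCount_eq_zero hforbidden h.travelOK
    rw [reversedOrient_of_le hw h (hlt.le.trans hYk) hX, hstraight, Nat.cast_zero] at hsuccX
    rw [reversedOrient_of_le hw h hYk hY]
    linarith
  · rw [reversedOrient_of_le hw h hXk hX] at hsuccX
    rw [reversedOrient_of_lt hw h (not_le.1 hYk) hY] at hsuccY
    rw [count_visitTail hlt.ne h.travelOK]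
    push_cast
    linarith
  · have hforbidden : Forbidden w k (l + 1) (wireY w (l + 1)) := by
      rw [Forbidden, otherWire_wireY hlt.ne]
      exact Or.inr ⟨not_le.1 hYk, not_le.1 hXk, hlt⟩
    have hstraight := straightCount_eq_zero hforbidden h.travelOK
    rw [reversedOrient_of_lt hw h (not_le.1 hYk) hY, hstraight, Nat.cast_zero] at hsuccY
    rw [reversedOrient_of_lt hw h (not_le.1 hXk) hX]
    linarith

lemma trailVec_eq_zero_or_one (hw : IsReduced n w) {p : ℕ × List ℕ} (hp : p ∈ GP n w)
    (j : Fin (Dim n)) : trailVec n w p j = 0 ∨ trailVec n w p j = 1 := by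
  have hj : (j : ℕ) < w.length := j.2.trans_eq hw.length_eq.symm
  have hvisits := List.nodup_iff_count_le_one.1 (IsGPPath.nodup_visitTail hp) (j + 1)
  have hcount := count_visitTail (hw.wireX_lt_wireY ⟨Nat.le_add_left 1 _, hj⟩).ne
    (IsGPPath.travelOK hp)
  have cast_eq : ∀ c : ℕ, c ≤ 1 → (c : ℝ) = 0 ∨ (c : ℝ) = 1 := fun c hc => by
    exact_mod_cast Nat.le_one_iff_eq_zero_or_eq_one.1 hc
  rw [trailVec, turning_reversedOrient hw hp hj]
  split_ifs
  · exact cast_eq _ (by omega)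
  · rcases cast_eq _ hvisits with hc | hc <;> simp [hc]
  · exact cast_eq _ (by omega)

lemma lamMatrix_mulVec_trailVec (hw : IsReduced n w) {p : ℕ × List ℕ} (j : Fin (Dim n)) :
    (lamMatrix n w).mulVec (trailVec n w p) j = normalVec n w p j +
      reversedOrient w p.1 p.2 w.length (n + 1 - letterAt w (j + 1)) -
      reversedOrient w p.1 p.2 w.length (n + 2 - letterAt w (j + 1)) := by
  have hj : (j : ℕ) < w.length := j.2.trans_eq hw.length_eq.symm
  have hne := (hw.wireX_lt_wireY ⟨Nat.le_add_left 1 _, hj⟩).ne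
  have hcons := hw.isConserved_reversedOrient p.1 p.2
  rw [show trailVec n w p = fun l : Fin (Dim n) => turning w (reversedOrient w p.1 p.2) l from rfl,
    hcons.lamMatrix_mulVec_turning hw, reversedOrient_succ_wireX hne, sub_sub_cancel, normalVec]

/-- At the bottom, reversing a path exchanges the orientations of `ℓ_k` and `ℓ_{k+1}` whatever the
path, so the difference of two trails of the same type only sees the two normal vectors. -/
lemma normalVec_sub_normalVec (hw : IsReduced n w) {p q : ℕ × List ℕ} (hp : p ∈ GP n w)
    (hq : q ∈ GP n w) (hpq : q.1 = p.1) :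
    normalVec n w q - normalVec n w p =
      (lamMatrix n w).mulVec (trailVec n w q - trailVec n w p) := by
  have hbottom : ∀ c,
      reversedOrient w q.1 q.2 w.length c = reversedOrient w p.1 p.2 w.length c := fun c => by
    rw [reversedOrient_length hw hq, reversedOrient_length hw hp, hpq]
  ext j
  rw [Matrix.mulVec_sub, Pi.sub_apply, Pi.sub_apply, lamMatrix_mulVec_trailVec hw,
    lamMatrix_mulVec_trailVec hw, hbottom, hbottom]
  ring

end Trails

/-! ### Paths are determined by their trails -/

section Uniqueness

variable {n k r a : ℕ} {w ms ms' : List ℕ}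

lemma switchSign_ne_zero (j r : ℕ) : switchSign w j r ≠ 0 := by
  unfold switchSign
  split_ifs <;> norm_num

lemma coeff_eq_zero_of_notMem {j : ℕ} (hj : j ∉ ms) : coeff w r ms j = 0 := by
  induction ms generalizing r with
  | nil => rfl
  | cons m ms ih =>
    obtain ⟨hm, hms⟩ := not_or.1 (mt List.mem_cons.2 hj)
    rw [coeff_cons, if_neg (Ne.symm hm), ih hms, add_zero]

lemma coeff_ne_zero_iff {j : ℕ} (hms : ms.Nodup) : coeff w r ms j ≠ 0 ↔ j ∈ ms := by
  refine ⟨fun h => not_imp_comm.1 coeff_eq_zero_of_notMem h, fun hj => ?_⟩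
  induction ms generalizing r with
  | nil => exact (List.not_mem_nil hj).elim
  | cons m ms ih =>
    obtain ⟨hm, hnd⟩ := List.nodup_cons.1 hms
    rw [coeff_cons]
    rcases List.mem_cons.1 hj with rfl | hj
    · rw [if_pos rfl, coeff_eq_zero_of_notMem hm, add_zero]
      exact switchSign_ne_zero _ _
    · rw [if_neg (ne_of_mem_of_not_mem hj hm).symm, zero_add]
      exact ih hnd hj

lemma sublist_visitTail : ms.Sublist (visitTail w r a ms) := by
  induction ms generalizing r a with
  | nil => exact List.nil_sublist _
  | cons m ms ih => exact (ih.cons_cons m).trans (List.sublist_append_right _ _)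

lemma TravelOK.validNode_of_mem (h : TravelOK w k r a ms) {j : ℕ} (hj : j ∈ ms) :
    ValidNode w j := by
  induction ms generalizing r a with
  | nil => exact (List.not_mem_nil hj).elim
  | cons m ms ih =>
    obtain ⟨hm, -, -, -, hrest⟩ := h
    rcases List.mem_cons.1 hj with rfl | hj
    exacts [hm, ih hrest hj]

lemma notMem_segList_of_nodup_visitTail {m j : ℕ} (hnd : (visitTail w r a (m :: ms)).Nodup)
    (hj : j ∈ m :: ms) : j ∉ segList w r a m := fun hseg =>
  (List.nodup_append'.1 hnd).2.2 hseg ((sublist_visitTail.cons_cons m).subset hj)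

/-- If the next switching nodes differed, the path with the further one would pass straight through
the nearer one and could not switch there later. -/
lemma eq_of_cons_perm_cons {m m' : ℕ} (h : TravelOK w k r a (m :: ms))
    (h' : TravelOK w k r a (m' :: ms')) (hnd : (visitTail w r a (m :: ms)).Nodup)
    (hnd' : (visitTail w r a (m' :: ms')).Nodup) (hperm : (m :: ms).Perm (m' :: ms')) :
    m = m' := by
  obtain ⟨hm, hr, hdir, -, -⟩ := h
  obtain ⟨hm', hr', hdir', -, -⟩ := h'
  have hnot := notMem_segList_of_nodup_visitTail hnd (hperm.symm.subset List.mem_cons_self)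
  have hnot' := notMem_segList_of_nodup_visitTail hnd' (hperm.subset List.mem_cons_self)
  rw [mem_segList, mem_nodesOn, and_iff_right ⟨hm', hr'⟩] at hnot
  rw [mem_segList, mem_nodesOn, and_iff_right ⟨hm, hr⟩] at hnot'
  split_ifs at hdir hdir' <;> omega

lemma eq_of_perm_of_travelOK (h : TravelOK w k r a ms) (h' : TravelOK w k r a ms')
    (hnd : (visitTail w r a ms).Nodup) (hnd' : (visitTail w r a ms').Nodup)
    (hperm : ms.Perm ms') : ms = ms' := by
  induction ms generalizing r a ms' with
  | nil => exact hperm.nil_eq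
  | cons m ms ih =>
    cases ms' with
    | nil => exact hperm.eq_nil
    | cons m' ms' =>
      obtain rfl := eq_of_cons_perm_cons h h' hnd hnd' hperm
      obtain ⟨-, -, -, -, hrest⟩ := h
      obtain ⟨-, -, -, -, hrest'⟩ := h'
      rw [ih hrest hrest' (List.nodup_append'.1 hnd).2.1.of_cons
        (List.nodup_append'.1 hnd').2.1.of_cons hperm.cons_inv]

lemma IsGPPath.subset_of_normalVec_eq (hw : IsReduced n w) (h : IsGPPath n w k ms)
    (h' : IsGPPath n w k ms') (heq : normalVec n w (k, ms) = normalVec n w (k, ms')) :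
    ms ⊆ ms' := by
  intro j hj
  obtain ⟨hj₁, hj₂⟩ := h.travelOK.validNode_of_mem hj
  obtain ⟨i, rfl⟩ : ∃ i, j = i + 1 := ⟨j - 1, (Nat.sub_add_cancel hj₁).symm⟩
  have hcoeff : coeff w k ms (i + 1) = coeff w k ms' (i + 1) :=
    congrFun heq ⟨i, hw.length_eq ▸ hj₂⟩
  rw [← coeff_ne_zero_iff (r := k) (sublist_visitTail.nodup h'.nodup_visitTail), ← hcoeff]
  exact (coeff_ne_zero_iff (sublist_visitTail.nodup h.nodup_visitTail)).2 hj

lemma eq_of_normalVec_eq (hw : IsReduced n w) {p q : ℕ × List ℕ} (hp : p ∈ GP n w)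
    (hq : q ∈ GP n w) (hpq : q.1 = p.1) (h : normalVec n w q = normalVec n w p) : q = p := by
  obtain ⟨k, ms⟩ := p
  obtain ⟨_, ms'⟩ := q
  obtain rfl : _ = k := hpq
  change IsGPPath n w _ ms at hp
  change IsGPPath n w _ ms' at hq
  have hperm : ms'.Perm ms :=
    (List.perm_ext_iff_of_nodup (sublist_visitTail.nodup hq.nodup_visitTail)
      (sublist_visitTail.nodup hp.nodup_visitTail)).2 fun _ =>
      ⟨fun hj => hq.subset_of_normalVec_eq hw hp h hj,
        fun hj => hp.subset_of_normalVec_eq hw hq h.symm hj⟩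
  rw [eq_of_perm_of_travelOK hq.travelOK hp.travelOK hq.nodup_visitTail hp.nodup_visitTail hperm]

lemma eq_of_trailVec_eq (hw : IsReduced n w) {p q : ℕ × List ℕ} (hp : p ∈ GP n w)
    (hq : q ∈ GP n w) (hpq : q.1 = p.1) (h : trailVec n w q = trailVec n w p) : q = p := by
  refine eq_of_normalVec_eq hw hp hq hpq (sub_eq_zero.1 ?_)
  rw [normalVec_sub_normalVec hw hp hq hpq, h, sub_self, Matrix.mulVec_zero]

lemma finite_GP (hw : IsReduced n w) : (GP n w).Finite := by
  have hfin : (Set.Iic n ×ˢ Set.univ.pi fun _ : Fin (Dim n) => ({0, 1} : Set ℝ)).Finite :=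
    (Set.finite_Iic n).prod (Set.Finite.pi fun _ => Set.toFinite _)
  refine Set.Finite.of_injOn (f := fun p => (p.1, trailVec n w p)) (fun p hp => ?_)
    (fun q hq p hp h => ?_) hfin
  · exact Set.mem_prod.2 ⟨hp.2.1, fun j _ => trailVec_eq_zero_or_one hw hp j⟩
  · obtain ⟨htype, htrail⟩ := Prod.mk.inj h
    exact eq_of_trailVec_eq hw hp hq htype htrail

end Uniqueness

/-! ### Points violating a single inequality -/

lemma one_le_dotProduct_of_zero_one {ι : Type*} [Fintype ι] {u v : ι → ℝ}
    (hu : ∀ i, u i = 0 ∨ u i = 1) (hv : ∀ i, v i = 0 ∨ v i = 1) (huv : u ≠ v) :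
    1 ≤ (1 - 2 * u) ⬝ᵥ (v - u) := by
  have hterm : ∀ i, (1 - 2 * u) i * (v - u) i = if u i = v i then 0 else 1 := fun i => by
    simp only [Pi.sub_apply, Pi.mul_apply, Pi.ofNat_apply]
    rcases hu i with h₁ | h₁ <;> rcases hv i with h₂ | h₂ <;> norm_num [h₁, h₂]
  obtain ⟨i, hi⟩ := Function.ne_iff.1 huv
  calc (1 : ℝ) = (1 - 2 * u) i * (v - u) i := by rw [hterm, if_neg hi]
    _ ≤ (1 - 2 * u) ⬝ᵥ (v - u) := Finset.single_le_sum (f := fun i => (1 - 2 * u) i * (v - u) i)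
      (fun j _ => by rw [hterm]; split_ifs <;> norm_num) (Finset.mem_univ i)

lemma exists_forall_sub_eq (δ : ℕ → ℝ) : ∃ y : ℕ → ℝ, ∀ k, y (k + 1) - y k = δ k :=
  ⟨fun r => ∑ q ∈ Finset.range r, δ q, fun _ => Finset.sum_range_succ_sub_sum δ⟩

section Witnesses

variable {n : ℕ} {w : List ℕ} {lam : ℕ → ℤ}

lemma stringIneq_add (p : ℕ × List ℕ) (s t : Fin (Dim n) → ℝ) :
    stringIneq n w p (s + t) = stringIneq n w p s + stringIneq n w p t :=
  dotProduct_add _ _ _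

lemma stringIneq_smul (p : ℕ × List ℕ) (c : ℝ) (t : Fin (Dim n) → ℝ) :
    stringIneq n w p (c • t) = c * stringIneq n w p t :=
  dotProduct_smul _ _ _

lemma stringIneq_sub_stringIneq (p q : ℕ × List ℕ) (t : Fin (Dim n) → ℝ) :
    stringIneq n w q t - stringIneq n w p t = (normalVec n w q - normalVec n w p) ⬝ᵥ t :=
  (sub_dotProduct _ _ _).symm

lemma exists_forall_stringIneq_add_one_le (hw : IsReduced n w) {p : ℕ × List ℕ}
    (hp : p ∈ GP n w) : ∃ t, ∀ q ∈ GP n w, q.1 = p.1 → q ≠ p →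
      stringIneq n w p t + 1 ≤ stringIneq n w q t := by
  obtain ⟨t, ht⟩ := lamMatrix_vecMul_surjective (n := n) (w := w) (1 - 2 * trailVec n w p)
  refine ⟨t, fun q hq hqp hne => ?_⟩
  have htrails : trailVec n w p ≠ trailVec n w q := fun h =>
    hne (eq_of_trailVec_eq hw hp hq hqp h.symm)
  have hdiff : stringIneq n w q t - stringIneq n w p t =
      (1 - 2 * trailVec n w p) ⬝ᵥ (trailVec n w q - trailVec n w p) := by
    rw [stringIneq_sub_stringIneq, normalVec_sub_normalVec hw hp hq hqp, dotProduct_comm,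
      Matrix.dotProduct_mulVec, ← ht]
  linarith [one_le_dotProduct_of_zero_one (trailVec_eq_zero_or_one hw hp)
    (trailVec_eq_zero_or_one hw hq) htrails]

lemma IsReduced.letterAt_succ_mem_Icc (hw : IsReduced n w) (j : Fin (Dim n)) :
    1 ≤ letterAt w (j + 1) ∧ letterAt w (j + 1) ≤ n :=
  hw.2.1 _ (letterAt_succ_mem (j.2.trans_eq hw.length_eq.symm))

lemma exists_pos_forall_lamMatrix_mulVec_smul_lt (hw : IsReduced n w)
    (hlam : RegularDominant n lam) (t : Fin (Dim n) → ℝ) :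
    ∃ ε : ℝ, 0 < ε ∧ ∀ j, (lamMatrix n w).mulVec (ε • t) j < weightVec n w lam j := by
  have hpos : ∀ j, 0 < weightVec n w lam j := fun j =>
    Int.cast_pos.2 (hlam _ (hw.letterAt_succ_mem_Icc j).1 (hw.letterAt_succ_mem_Icc j).2)
  simp only [Matrix.mulVec_smul]
  exact exists_pos_forall_mul_lt _ _ hpos

lemma exists_forall_stringIneq_pos_forall_lt (hw : IsReduced n w)
    (hlam : RegularDominant n lam) : ∃ x, (∀ p ∈ GP n w, 0 < stringIneq n w p x) ∧
      ∀ j, (lamMatrix n w).mulVec x j < weightVec n w lam j := by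
  obtain ⟨y, hy⟩ := exists_forall_sub_eq fun _ => 1
  obtain ⟨ε, hε, hlt⟩ := exists_pos_forall_lamMatrix_mulVec_smul_lt hw hlam (crossingVec n w y)
  refine ⟨ε • crossingVec n w y, fun p hp => ?_, hlt⟩
  rwa [stringIneq_smul, stringIneq_crossingVec_of_mem_GP hw y hp, hy, mul_one]

lemma exists_stringIneq_neg (hw : IsReduced n w) (hlam : RegularDominant n lam)
    {p : ℕ × List ℕ} (hp : p ∈ GP n w) :
    ∃ x ∈ stringConeExcept n w p ∩ lamCone n w lam, stringIneq n w p x < 0 := by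
  obtain ⟨t, ht⟩ := exists_forall_stringIneq_add_one_le hw hp
  obtain ⟨B, hB⟩ := ((finite_GP hw).image fun q => stringIneq n w q t).bddBelow
  -- The crossing vector shifts all inequalities of the type of `p` below `p` only, and lifts all
  -- those of the other types.
  obtain ⟨y, hy⟩ := exists_forall_sub_eq fun k =>
    if k = p.1 then -1 / 2 - stringIneq n w p t else -B
  have hshift : ∀ q ∈ GP n w, stringIneq n w q (t + crossingVec n w y) =
      stringIneq n w q t + if q.1 = p.1 then -1 / 2 - stringIneq n w p t else -B := fun q hq => by
    rw [stringIneq_add, stringIneq_crossingVec_of_mem_GP hw y hq, hy]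
  obtain ⟨ε, hε, hlt⟩ :=
    exists_pos_forall_lamMatrix_mulVec_smul_lt hw hlam (t + crossingVec n w y)
  refine ⟨ε • (t + crossingVec n w y),
    ⟨fun q hq hne => ?_, fun j => lamIneq_iff.2 (hlt j).le⟩, ?_⟩
  · rw [stringIneq_smul, hshift q hq]
    refine mul_nonneg hε.le ?_
    split_ifs with hqp
    · linarith [ht q hq hqp hne]
    · linarith [hB (Set.mem_image_of_mem _ hq)]
  · rw [stringIneq_smul, hshift p hp, if_pos rfl]
    exact mul_neg_of_pos_of_neg hε (by linarith)

lemma exists_lamMatrix_mulVec_crossingVec_eq_weightVec (hw : IsReduced n w) (lam : ℕ → ℤ) :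
    ∃ y : ℕ → ℝ, (∀ k, y (k + 1) - y k = lam (n + 1 - k)) ∧
      (lamMatrix n w).mulVec (crossingVec n w y) = weightVec n w lam := by
  obtain ⟨y, hy⟩ := exists_forall_sub_eq fun k => (lam (n + 1 - k) : ℝ)
  refine ⟨y, hy, funext fun j => ?_⟩
  obtain ⟨hpos, hle⟩ := hw.letterAt_succ_mem_Icc j
  have hcol : n + 2 - letterAt w (j + 1) = n + 1 - letterAt w (j + 1) + 1 := by omega
  have hletter : n + 1 - (n + 1 - letterAt w (j + 1)) = letterAt w (j + 1) := by omega
  rw [hw.lamMatrix_mulVec_crossingVec, hcol, hy, hletter, weightVec]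

lemma exists_not_lamIneq (hw : IsReduced n w) (hlam : RegularDominant n lam)
    (j : Fin (Dim n)) :
    ∃ x ∈ stringCone n w ∩ lamConeExcept n w lam j, ¬ LamIneq n w lam j x := by
  obtain ⟨y, hy, hvertex⟩ := exists_lamMatrix_mulVec_crossingVec_eq_weightVec hw lam
  obtain ⟨u, hu⟩ := lamMatrix_mulVec_surjective (n := n) (w := w) (Pi.single j 1)
  have : Finite (GP n w) := (finite_GP hw).to_subtype
  have hpos : ∀ q : GP n w, (0 : ℝ) < lam (n + 1 - q.1.1) := fun ⟨(k, _), hk₁, hkn, _⟩ =>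
    Int.cast_pos.2 (hlam (n + 1 - k) (Nat.sub_pos_of_lt (Nat.lt_succ_of_le hkn)) (by omega))
  obtain ⟨ε, hε, hlt⟩ := exists_pos_forall_mul_lt (fun q : GP n w => -stringIneq n w q u) _ hpos
  have hmulVec : ∀ k, (lamMatrix n w).mulVec (crossingVec n w y + ε • u) k =
      weightVec n w lam k + ε * (Pi.single j 1 : Fin (Dim n) → ℝ) k := fun k => by
    rw [Matrix.mulVec_add, Matrix.mulVec_smul, hvertex, hu]
    rfl
  refine ⟨crossingVec n w y + ε • u, ⟨fun q hq => ?_, fun k hk => ?_⟩, ?_⟩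
  · rw [stringIneq_add, stringIneq_smul, stringIneq_crossingVec_of_mem_GP hw y hq, hy]
    linarith [hlt ⟨q, hq⟩]
  · rw [lamIneq_iff, hmulVec, Pi.single_eq_of_ne hk, mul_zero, add_zero]
  · rw [lamIneq_iff, hmulVec, Pi.single_eq_same, mul_one, not_le]
    exact lt_add_of_pos_right _ hε

end Witnesses

/-! ### The string polytope -/

section Polytope

variable {n : ℕ} {w : List ℕ} {lam : ℕ → ℤ}

/-- The linear functionals bounded from above by `constraintBound` on the string polytope: the
negated string inequalities followed by the left-hand sides of the `λ`-inequalities. -/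
def constraintMap (n : ℕ) (w : List ℕ) : GP n w ⊕ Fin (Dim n) → (Fin (Dim n) → ℝ) →ₗ[ℝ] ℝ :=
  Sum.elim (fun p => -dotProductEquiv ℝ (Fin (Dim n)) (normalVec n w p))
    fun j => LinearMap.proj j ∘ₗ (lamMatrix n w).mulVecLin

/-- The upper bounds of the functionals `constraintMap` on the string polytope. -/
def constraintBound (n : ℕ) (w : List ℕ) (lam : ℕ → ℤ) : GP n w ⊕ Fin (Dim n) → ℝ :=
  Sum.elim 0 (weightVec n w lam)

lemma constraintMap_inl_le_iff {p : GP n w} {x : Fin (Dim n) → ℝ} :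
    constraintMap n w (.inl p) x ≤ constraintBound n w lam (.inl p) ↔ 0 ≤ stringIneq n w p x :=
  neg_nonpos

lemma constraintMap_inr_le_iff {j : Fin (Dim n)} {x : Fin (Dim n) → ℝ} :
    constraintMap n w (.inr j) x ≤ constraintBound n w lam (.inr j) ↔ LamIneq n w lam j x :=
  lamIneq_iff.symm

lemma stringPolytope_eq_polyhedron :
    stringPolytope n w lam = polyhedron (constraintMap n w) (constraintBound n w lam) := by
  ext x
  rw [polyhedron, Set.mem_ofPred_eq, Sum.forall]
  simp only [constraintMap_inl_le_iff, constraintMap_inr_le_iff, Subtype.forall]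
  rfl

lemma exists_forall_constraintMap_lt (hw : IsReduced n w) (hlam : RegularDominant n lam) :
    ∃ x, ∀ c, constraintMap n w c x < constraintBound n w lam c := by
  obtain ⟨x, hstring, hlt⟩ := exists_forall_stringIneq_pos_forall_lt hw hlam
  exact ⟨x, Sum.rec (fun p => neg_lt_zero.2 (hstring p p.2)) hlt⟩

lemma exists_constraintBound_lt (hw : IsReduced n w) (hlam : RegularDominant n lam)
    (c : GP n w ⊕ Fin (Dim n)) : ∃ x, constraintBound n w lam c < constraintMap n w c x ∧
      ∀ d, d ≠ c → constraintMap n w d x ≤ constraintBound n w lam d := by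
  rcases c with p | j
  · obtain ⟨x, ⟨hstring, hlamCone⟩, hneg⟩ := exists_stringIneq_neg hw hlam p.2
    refine ⟨x, neg_pos.2 hneg, ?_⟩
    rintro (q | k) hne
    · exact constraintMap_inl_le_iff.2
        (hstring q q.2 fun h => hne (congrArg Sum.inl (Subtype.ext h)))
    · exact constraintMap_inr_le_iff.2 (hlamCone k)
  · obtain ⟨x, ⟨hstring, hlamCone⟩, hnot⟩ := exists_not_lamIneq hw hlam j
    refine ⟨x, not_le.1 (mt constraintMap_inr_le_iff.1 hnot), ?_⟩
    rintro (q | k) hne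
    · exact constraintMap_inl_le_iff.2 (hstring q q.2)
    · exact constraintMap_inr_le_iff.2 (hlamCone k fun h => hne (congrArg Sum.inr h))

lemma dim_pos (hn : 1 ≤ n) : 0 < Dim n :=
  Nat.div_pos (by nlinarith) two_pos

lemma numFacets_stringPolytope (hn : 1 ≤ n) (hw : IsReduced n w) (hlam : RegularDominant n lam) :
    numFacets (stringPolytope n w lam) = numGP n w + Dim n := by
  have : Finite (GP n w) := (finite_GP hw).to_subtype
  have : Nonempty (GP n w ⊕ Fin (Dim n)) := ⟨.inr ⟨0, dim_pos hn⟩⟩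
  obtain ⟨x, hx⟩ := exists_forall_constraintMap_lt hw hlam
  rw [stringPolytope_eq_polyhedron,
    numFacets_polyhedron hx (exists_constraintBound_lt hw hlam), Nat.card_sum, Nat.card_fin,
    Nat.card_coe_set_eq, numGP]

end Polytope

/-- non-redundancy for the string polytope.
For a regular dominant integral weight `λ`, the system of the `|GP(i)|` string
inequalities together with the `N` `λ`-inequalities is non-redundant for `Δ_i(λ)`:
removing any single inequality changes the polytope; equivalently `Δ_i(λ)` has
exactly `|GP(i)| + N` facets. -/
theorem statement6 (n : ℕ) (hn : 1 ≤ n) (i : List ℕ) (hi : IsReduced n i)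
    (lam : ℕ → ℤ) (hlam : RegularDominant n lam) :
    (∀ p ∈ GP n i, stringConeExcept n i p ∩ lamCone n i lam ≠ stringPolytope n i lam) ∧
    (∀ j : Fin (Dim n), stringCone n i ∩ lamConeExcept n i lam j ≠ stringPolytope n i lam) ∧
    numFacets (stringPolytope n i lam) = numGP n i + Dim n := by
  refine ⟨fun p hp heq => ?_, fun j heq => ?_, numFacets_stringPolytope hn hi hlam⟩
  · obtain ⟨x, hx, hneg⟩ := exists_stringIneq_neg hi hlam hp
    exact hneg.not_ge ((heq ▸ hx : x ∈ stringPolytope n i lam).1 p hp)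
  · obtain ⟨x, hx, hnot⟩ := exists_not_lamIneq hi hlam j
    exact hnot ((heq ▸ hx : x ∈ stringPolytope n i lam).2 j)

end StringPolytope
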